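/- arXiv:1507.06691 — 4 statements merged into one kernel-verified Lean document; each statement's English description precedes it below -/
import Mathlib

section
/- Let U be a Banach space, V a Hilbert space, b : U × V → ℝ a bounded bilinear form satisfying injectivity and inf-sup conditions, and Θ : U → V the trial-to-test operator defined by ⟨Θu, v⟩_V = b(u,v) for all v ∈ V. If U_h ⊂ U is a finite-dimensional subspace and u ∈ U satisfies b(u,v)=ℓ(v) for all v∈V, then there is a unique u_h ∈ U_h with b(u_h, Θw_h) = ℓ(Θw_h) for all w_h ∈ U_h, and ‖u − u_h‖_E = inf_{w_h ∈ U_h} ‖u − w_h‖_E. -/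
open scoped RealInnerProductSpace

/-- discrete DPG problem with optimal test functions: unique solvability
in a finite-dimensional subspace and best approximation in the energy norm. -/
theorem dpg_discrete_wellposedness_best_approximation
    (U V : Type*) [NormedAddCommGroup U] [NormedSpace ℝ U] [CompleteSpace U]
    [NormedAddCommGroup V] [InnerProductSpace ℝ V] [CompleteSpace V]
    (b : U →L[ℝ] V →L[ℝ] ℝ)
    (hinj : ∀ u : U, (∀ v : V, b u v = 0) → u = 0)
    (γ : ℝ) (hγ : 0 < γ)
    (hinfsup : ∀ v : V, γ * ‖v‖ ≤ sSup {r : ℝ | ∃ u : U, u ≠ 0 ∧ r = b u v / ‖u‖})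
    (E : U → ℝ)
    (hE : ∀ u : U, E u = sSup {r : ℝ | ∃ v : V, v ≠ 0 ∧ r = b u v / ‖v‖})
    (Θ : U → V) (hΘ : ∀ (u : U) (v : V), ⟪Θ u, v⟫ = b u v)
    (Uh : Submodule ℝ U) [FiniteDimensional ℝ Uh]
    (ℓ : V →L[ℝ] ℝ) (u : U) (hu : ∀ v : V, b u v = ℓ v) :
    ∃ uh : U, uh ∈ Uh ∧ (∀ wh ∈ Uh, b uh (Θ wh) = ℓ (Θ wh)) ∧
      (∀ uh' : U, uh' ∈ Uh → (∀ wh ∈ Uh, b uh' (Θ wh) = ℓ (Θ wh)) → uh' = uh) ∧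
      E (u - uh) = sInf {r : ℝ | ∃ wh ∈ Uh, r = E (u - wh)} := by
  have hT : ∃ T : U →ₗ[ℝ] V, ∀ x, T x = Θ x := by
    refine ⟨{ toFun := Θ, map_add' := ?_, map_smul' := ?_ }, fun x => rfl⟩
    · intro x y
      refine ext_inner_right ℝ fun v => ?_
      rw [inner_add_left, hΘ, hΘ, hΘ, map_add, ContinuousLinearMap.add_apply]
    · intro c x
      refine ext_inner_right ℝ fun v => ?_
      rw [RingHom.id_apply, real_inner_smul_left, hΘ, hΘ, map_smul,
        ContinuousLinearMap.smul_apply, smul_eq_mul]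
  obtain ⟨T, hT⟩ := hT
  have hb : ∀ x v, b x v = ⟪T x, v⟫ := fun x v => by rw [hT, hΘ]
  have hTinj : ∀ x, T x = 0 → x = 0 := fun x hx =>
    hinj x fun v => by rw [hb, hx, inner_zero_left]
  have hEn : ∀ x, E x = ‖T x‖ := by
    intro x
    rw [hE]
    by_cases hx : T x = 0
    · rw [hx, norm_zero]
      apply le_antisymm
      · apply Real.sSup_nonpos
        rintro r ⟨v, -, rfl⟩
        simp [hb, hx]
      · apply Real.sSup_nonneg
        rintro r ⟨v, -, rfl⟩
        simp [hb, hx]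
    · apply IsGreatest.csSup_eq
      constructor
      · refine ⟨T x, hx, ?_⟩
        have : ‖T x‖ ≠ 0 := norm_ne_zero_iff.mpr hx
        rw [hb, real_inner_self_eq_norm_sq]
        field_simp
      · rintro r ⟨v, hv, rfl⟩
        rw [div_le_iff₀ (norm_pos_iff.mpr hv), hb]
        exact real_inner_le_norm _ _
  let W : Submodule ℝ V := Uh.map T
  obtain ⟨uh, huh, hP⟩ : ∃ uh ∈ Uh, T uh = W.starProjection (T u) :=
    Submodule.mem_map.mp (W.starProjection_apply_mem (T u))
  have horth : ∀ w ∈ Uh, ⟪T u - T uh, T w⟫ = 0 := by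
    intro w hw
    rw [hP]
    exact W.starProjection_inner_eq_zero (T u) (T w) (Submodule.mem_map_of_mem hw)
  have hsol : ∀ w ∈ Uh, b uh (Θ w) = ℓ (Θ w) := by
    intro w hw
    have h := horth w hw
    rw [inner_sub_left] at h
    rw [← hu, hb, hb, ← hT]
    linarith
  refine ⟨uh, huh, hsol, ?_, ?_⟩
  · intro y hy hys
    have h1 := hys (y - uh) (Uh.sub_mem hy huh)
    have h2 := hsol (y - uh) (Uh.sub_mem hy huh)
    rw [hb, ← hT] at h1 h2
    have h3 : ⟪T (y - uh), T (y - uh)⟫ = 0 := by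
      conv_lhs => rw [map_sub T y uh]
      rw [inner_sub_left, ← map_sub T y uh, h1, h2, sub_self]
    exact sub_eq_zero.mp (hTinj _ (inner_self_eq_zero.mp h3))
  · symm
    apply IsLeast.csInf_eq
    refine ⟨⟨uh, huh, rfl⟩, ?_⟩
    rintro r ⟨w, hw, rfl⟩
    rw [hEn, hEn]
    have h := horth (uh - w) (Uh.sub_mem huh hw)
    have h4 : T (u - w) = (T u - T uh) + T (uh - w) := by
      simp only [map_sub]; abel
    have h5 := norm_add_sq_eq_norm_sq_add_norm_sq_of_inner_eq_zero _ _ h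
    rw [← h4, ← map_sub] at h5
    nlinarith [norm_nonneg (T (u - w)), norm_nonneg (T (u - uh)), norm_nonneg (T (uh - w))]
end

section
/- For 0 < β < 1 and every φ ∈ C_c^∞((0,1)), the Riemann–Liouville fractional integral satisfies the coercivity estimate ∫_0^1 (D^{-β}φ)(x) φ(x) dx ≥ cos(πβ/2) ∫_ℝ |ξ|^{-β} |F(φ)(ξ)|² dξ, where φ is extended by zero to ℝ and F denotes the Fourier transform. In particular, ∫_0^1 (D^{-β}φ)φ dx ≥ 0. -/
open MeasureTheory Set

/-- Fourier transform `F u (ξ) = (2π)^{-1/2} ∫_ℝ u(x) e^{-i x ξ} dx` of a real function. -/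
noncomputable def FT (u : ℝ → ℝ) (ξ : ℝ) : ℂ :=
  ((2 * Real.pi) ^ (-(1 : ℝ) / 2) : ℝ) *
    ∫ x : ℝ, (u x : ℂ) * Complex.exp (-Complex.I * x * ξ)

/-- Left-sided Riemann–Liouville fractional integral of order `β` on `(0,1)`. -/
noncomputable def RLleft (β : ℝ) (u : ℝ → ℝ) (x : ℝ) : ℝ :=
  (Real.Gamma β)⁻¹ * ∫ s in Ioo (0 : ℝ) x, (x - s) ^ (β - 1) * u s


lemma rl_gamma_const (β : ℝ) (hβ0 : 0 < β) (hβ1 : β < 1) :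
    (Real.sqrt Real.pi * Real.Gamma (β / 2) * 2 ^ β) / (2 * Real.Gamma β * Real.Gamma ((1 - β) / 2))
      = Real.cos (Real.pi * β / 2) := by
  have h1 := Real.Gamma_mul_Gamma_add_half (β / 2)
  have h2 := Real.Gamma_mul_Gamma_one_sub ((1 - β) / 2)
  rw [show 1 - (1 - β) / 2 = β / 2 + 1 / 2 by ring,
    show Real.pi * ((1 - β) / 2) = Real.pi / 2 - Real.pi * β / 2 by ring,
    Real.sin_pi_div_two_sub] at h2
  rw [show 2 * (β / 2) = β by ring, Real.rpow_sub two_pos, Real.rpow_one] at h1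
  have hc : 0 < Real.cos (Real.pi * β / 2) := by
    apply Real.cos_pos_of_mem_Ioo
    constructor <;> nlinarith [Real.pi_pos]
  have g1 := Real.Gamma_pos_of_pos hβ0
  have g2 : 0 < Real.Gamma ((1 - β) / 2) := Real.Gamma_pos_of_pos (by linarith)
  have g3 : 0 < Real.Gamma (β / 2 + 1 / 2) := Real.Gamma_pos_of_pos (by linarith)
  have hp : (0 : ℝ) < 2 ^ β := by positivity
  have hs : Real.sqrt Real.pi * Real.sqrt Real.pi = Real.pi := Real.mul_self_sqrt Real.pi_pos.le
  rw [div_eq_iff (by positivity)]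
  rw [eq_div_iff hc.ne'] at h2
  apply mul_right_cancel₀ g3.ne'
  have h1' : Real.Gamma (β / 2) * Real.Gamma (β / 2 + 1 / 2) * 2 ^ β
      = Real.Gamma β * 2 * Real.sqrt Real.pi := by
    rw [h1]; field_simp
  calc _ = Real.sqrt Real.pi * (Real.Gamma (β / 2) * Real.Gamma (β / 2 + 1 / 2) * 2 ^ β) := by ring
    _ = 2 * Real.Gamma β * (Real.sqrt Real.pi * Real.sqrt Real.pi) := by rw [h1']; ring
    _ = _ := by rw [hs]; linear_combination (-2 * Real.Gamma β) * h2

lemma rl_kernel_left (β : ℝ) (hβ1 : β < 1) (t : ℝ) (ht : t ≠ 0) :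
    ∫ s in Ioi (0 : ℝ), s ^ ((1 - β) / 2 - 1) * Real.exp (-s * t ^ 2)
      = Real.Gamma ((1 - β) / 2) * |t| ^ (β - 1) := by
  have h := Real.integral_rpow_mul_exp_neg_mul_Ioi (a := (1 - β) / 2) (r := t ^ 2)
    (by linarith) (by positivity)
  rw [mul_comm (Real.Gamma _)]
  have e : (1 / t ^ 2) ^ ((1 - β) / 2) = |t| ^ (β - 1) := by
    rw [← sq_abs, one_div, Real.inv_rpow (by positivity), ← Real.rpow_natCast,
      ← Real.rpow_mul (abs_nonneg _), ← Real.rpow_neg (abs_nonneg _)]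
    congr 1; push_cast; ring
  rw [← e, ← h]
  congr 1; ext s; ring_nf

lemma rl_kernel_left_int (β : ℝ) (hβ1 : β < 1) (t : ℝ) (ht : t ≠ 0) :
    IntegrableOn (fun s : ℝ => s ^ ((1 - β) / 2 - 1) * Real.exp (-s * t ^ 2)) (Ioi 0) := by
  by_contra h
  have := rl_kernel_left β hβ1 t ht
  rw [integral_undef h] at this
  have g2 : 0 < Real.Gamma ((1 - β) / 2) := Real.Gamma_pos_of_pos (by linarith)
  have : 0 < Real.Gamma ((1 - β) / 2) * |t| ^ (β - 1) := by positivity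
  linarith

lemma rl_kernel_right (β : ℝ) (hβ0 : 0 < β) (t : ℝ) (ht : t ≠ 0) :
    ∫ s in Ioi (0 : ℝ), s ^ ((1 - β) / 2 - 1) * (Real.sqrt (4 * Real.pi * s))⁻¹ *
        Real.exp (-(1 / (4 * s)) * t ^ 2)
      = (Real.sqrt (4 * Real.pi))⁻¹ * (Real.Gamma (β / 2) * 2 ^ β * |t| ^ (-β)) := by
  have h := Real.integral_rpow_mul_exp_neg_mul_Ioi (a := β / 2) (r := t ^ 2 / 4)
    (by linarith) (by positivity)
  have e : (1 / (t ^ 2 / 4)) ^ (β / 2) = 2 ^ β * |t| ^ (-β) := by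
    rw [show 1 / (t ^ 2 / 4) = (2 * |t|⁻¹) ^ (2 : ℝ) by
        rw [← sq_abs, Real.rpow_ofNat]; field_simp; norm_num,
      ← Real.rpow_mul (by positivity), Real.mul_rpow (by positivity) (by positivity),
      Real.inv_rpow (by positivity), Real.rpow_neg (by positivity)]
    ring_nf
  rw [show Real.Gamma (β / 2) * 2 ^ β * |t| ^ (-β) = (1 / (t ^ 2 / 4)) ^ (β / 2) * Real.Gamma (β / 2)
    by rw [e]; ring, ← h, ← integral_const_mul]
  conv_rhs => rw [← integral_comp_rpow_Ioi _ (show (-1 : ℝ) ≠ 0 by norm_num)]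
  refine setIntegral_congr_fun measurableSet_Ioi (fun s hs => ?_)
  have hs : 0 < s := hs
  simp only [smul_eq_mul]
  rw [← Real.rpow_mul hs.le, Real.sqrt_mul (by positivity), mul_inv, Real.sqrt_eq_rpow s,
    ← Real.rpow_neg hs.le, Real.rpow_neg_one]
  rw [show s ^ ((1 - β) / 2 - 1) = s ^ ((-1 : ℝ) - 1) * s ^ (-1 * (β / 2 - 1)) * s ^ (1 / 2 : ℝ) by
    rw [← Real.rpow_add hs, ← Real.rpow_add hs]; congr 1; ring]
  rw [Real.rpow_neg hs.le (1 / 2)]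
  have : 0 < s ^ (1 / 2 : ℝ) := by positivity
  rw [show -(t ^ 2 / 4 * s⁻¹) = -(1 / (4 * s)) * t ^ 2 by field_simp]
  simp only [abs_neg, abs_one]
  field_simp

lemma rl_gauss (s : ℝ) (hs : 0 < s) (t : ℝ) :
    ∫ ξ : ℝ, Complex.exp (Complex.I * t * ξ) * Complex.exp (-(1 / (4 * s) : ℝ) * ξ ^ 2)
      = (Real.sqrt (4 * Real.pi * s) * Real.exp (-s * t ^ 2) : ℝ) := by
  have h := fourierIntegral_gaussian (b := ((1 / (4 * s) : ℝ) : ℂ))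
    (by rw [Complex.ofReal_re]; positivity) t
  rw [h]
  push_cast
  have : (Real.pi : ℂ) / (1 / (4 * s)) = ((4 * Real.pi * s : ℝ) : ℂ) := by
    push_cast; field_simp
  rw [this, Real.sqrt_eq_rpow, Complex.ofReal_cpow (by positivity)]
  have hs' : (s : ℂ) ≠ 0 := by exact_mod_cast hs.ne'
  push_cast
  congr 2
  field_simp

lemma rl_ne_ae : ∀ᵐ p : ℝ × ℝ, p.1 - p.2 ≠ 0 := by
  have hm : MeasurableSet {p : ℝ × ℝ | p.1 - p.2 ≠ 0} := by
    apply IsOpen.measurableSet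
    exact isOpen_ne_fun (by fun_prop) (by fun_prop)
  rw [Measure.volume_eq_prod, Measure.ae_prod_iff_ae_ae hm]
  refine Filter.Eventually.of_forall (fun x => ?_)
  have : ∀ᵐ y : ℝ, y ≠ x := by simp [ae_iff]
  filter_upwards [this] with y hy h
  exact hy (by linarith [sub_eq_zero.mp h])

noncomputable def rlk (β : ℝ) : ℝ → ℝ := (Ioo (0 : ℝ) 1).indicator (fun t => t ^ (β - 1))

lemma rlk_int (β : ℝ) (hβ0 : 0 < β) : Integrable (rlk β) := by
  unfold rlk
  rw [integrable_indicator_iff measurableSet_Ioo,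
    intervalIntegral.integrableOn_Ioo_rpow_iff one_pos]
  linarith

lemma rl_H_int (β : ℝ) (hβ0 : 0 < β) (φ : ℝ → ℝ) (hc : Continuous φ) (hsupp : HasCompactSupport φ) :
    Integrable (fun p : ℝ × ℝ => φ p.2 * rlk β (p.1 - p.2) * φ p.1) (volume.prod volume) := by
  have hi : Integrable φ := hc.integrable_of_hasCompactSupport hsupp
  obtain ⟨C, hC⟩ := hsupp.exists_bound_of_continuous hc
  have h := Integrable.convolution_integrand (ContinuousLinearMap.mul ℝ ℝ) hi (rlk_int β hβ0)
  simp only [ContinuousLinearMap.mul_apply'] at h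
  exact h.mul_bdd (c := C) (hc.comp continuous_fst).aestronglyMeasurable
    (Filter.Eventually.of_forall fun p => hC _)

lemma rl_K_eq (β : ℝ) (hβ1 : β < 1) (φ : ℝ → ℝ)
    (h01 : ∀ x, φ x ≠ 0 → x ∈ Ioo (0 : ℝ) 1) (p : ℝ × ℝ) :
    φ p.1 * φ p.2 * |p.1 - p.2| ^ (β - 1) =
      φ p.2 * rlk β (p.1 - p.2) * φ p.1 +
      φ p.swap.2 * rlk β (p.swap.1 - p.swap.2) * φ p.swap.1 := by
  obtain ⟨x, y⟩ := p
  simp only [Prod.swap]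
  by_cases hx : φ x = 0
  · simp [hx]
  by_cases hy : φ y = 0
  · simp [hy]
  have hx := h01 x hx
  have hy := h01 y hy
  simp only [mem_Ioo] at hx hy
  unfold rlk
  rcases lt_trichotomy x y with h | h | h
  · rw [indicator_of_notMem (by simp only [mem_Ioo]; intro h; linarith),
      indicator_of_mem (by constructor <;> linarith), abs_of_neg (by linarith), neg_sub]
    ring
  · subst h
    have : β - 1 ≠ 0 := by linarith
    simp [Real.zero_rpow this]
  · rw [indicator_of_mem (by constructor <;> linarith),
      indicator_of_notMem (by simp only [mem_Ioo]; intro h; linarith), abs_of_pos (by linarith)]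
    ring

lemma rl_K_int (β : ℝ) (hβ0 : 0 < β) (hβ1 : β < 1) (φ : ℝ → ℝ) (hc : Continuous φ)
    (hsupp : HasCompactSupport φ) (h01 : ∀ x, φ x ≠ 0 → x ∈ Ioo (0 : ℝ) 1) :
    Integrable (fun p : ℝ × ℝ => φ p.1 * φ p.2 * |p.1 - p.2| ^ (β - 1)) (volume.prod volume) := by
  rw [funext (rl_K_eq β hβ1 φ h01)]
  exact (rl_H_int β hβ0 φ hc hsupp).add (rl_H_int β hβ0 φ hc hsupp).swap

lemma rl_K_integral (β : ℝ) (hβ0 : 0 < β) (hβ1 : β < 1) (φ : ℝ → ℝ) (hc : Continuous φ)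
    (hsupp : HasCompactSupport φ) (h01 : ∀ x, φ x ≠ 0 → x ∈ Ioo (0 : ℝ) 1) :
    ∫ p : ℝ × ℝ, φ p.1 * φ p.2 * |p.1 - p.2| ^ (β - 1) ∂(volume.prod volume) =
      2 * Real.Gamma β * ∫ x in Ioo (0 : ℝ) 1, RLleft β φ x * φ x := by
  have hH := rl_H_int β hβ0 φ hc hsupp
  rw [funext (rl_K_eq β hβ1 φ h01)]
  refine (integral_add hH hH.swap).trans ?_
  simp only [Function.comp_def]
  rw [integral_prod_swap (fun p : ℝ × ℝ => φ p.2 * rlk β (p.1 - p.2) * φ p.1),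
    ← two_mul, mul_assoc]
  congr 1
  rw [integral_prod _ hH, ← integral_const_mul, ← integral_indicator measurableSet_Ioo]
  congr 1
  ext x
  have hG := (Real.Gamma_pos_of_pos hβ0).ne'
  by_cases hx : φ x = 0
  · simp [hx, indicator]
  have hx := h01 x hx
  rw [indicator_of_mem hx]
  unfold RLleft
  simp only
  rw [integral_mul_const, ← mul_assoc, ← mul_assoc, mul_inv_cancel₀ hG, one_mul,
    ← integral_indicator measurableSet_Ioo]
  congr 2
  ext s
  simp only [mem_Ioo] at hx
  by_cases hs : φ s = 0
  · simp [hs, indicator]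
  have hs := h01 s hs
  simp only [mem_Ioo] at hs
  unfold rlk
  by_cases h : s < x
  · rw [indicator_of_mem (by constructor <;> linarith), indicator_of_mem (by constructor <;> linarith)]
    ring
  · rw [indicator_of_notMem (by simp only [mem_Ioo]; intro h; linarith),
      indicator_of_notMem (by simp only [mem_Ioo]; intro h; linarith)]
    ring

noncomputable def rlPhi (φ : ℝ → ℝ) (ξ : ℝ) : ℂ :=
  ∫ x : ℝ, (φ x : ℂ) * Complex.exp (-Complex.I * x * ξ)

lemma rl_FT (φ : ℝ → ℝ) (ξ : ℝ) : ‖rlPhi φ ξ‖ ^ 2 = 2 * Real.pi * ‖FT φ ξ‖ ^ 2 := by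
  unfold FT
  rw [← rlPhi, norm_mul, mul_pow, Complex.norm_real, Real.norm_eq_abs, sq_abs, ← Real.rpow_natCast,
    ← Real.rpow_natCast, ← Real.rpow_mul (by positivity)]
  rw [show -(1 : ℝ) / 2 * ((2 : ℕ) : ℝ) = -1 by norm_num, Real.rpow_neg_one, ← mul_assoc,
    mul_inv_cancel₀ (by positivity), one_mul]

lemma rl_Phi_sq (φ : ℝ → ℝ) (ξ : ℝ) :
    ((‖rlPhi φ ξ‖ ^ 2 : ℝ) : ℂ) = ∫ p : ℝ × ℝ, ((φ p.1 * φ p.2 : ℝ) : ℂ) *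
      Complex.exp (Complex.I * ((p.1 - p.2 : ℝ) : ℂ) * ξ) ∂(volume.prod volume) := by
  have hconj : (starRingEnd ℂ) (rlPhi φ ξ) = ∫ x : ℝ, (φ x : ℂ) * Complex.exp (Complex.I * x * ξ) := by
    unfold rlPhi
    rw [← integral_conj]
    congr 1; ext x
    rw [map_mul, ← Complex.exp_conj]
    simp
  rw [Complex.ofReal_pow, ← Complex.conj_mul', hconj, rlPhi, ← integral_prod_mul]
  congr 1; ext p
  push_cast
  rw [show Complex.I * ((p.1 : ℂ) - p.2) * ξ = Complex.I * p.1 * ξ + -Complex.I * p.2 * ξ by ring,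
    Complex.exp_add]
  ring

lemma rl_gauss_parseval (s : ℝ) (hs : 0 < s) (φ : ℝ → ℝ) (hc : Continuous φ)
    (hsupp : HasCompactSupport φ) :
    Integrable (fun ξ => ‖rlPhi φ ξ‖ ^ 2 * Real.exp (-(1 / (4 * s)) * ξ ^ 2)) ∧
    ∫ ξ, ‖rlPhi φ ξ‖ ^ 2 * Real.exp (-(1 / (4 * s)) * ξ ^ 2) =
      Real.sqrt (4 * Real.pi * s) *
        ∫ p : ℝ × ℝ, φ p.1 * φ p.2 * Real.exp (-s * (p.1 - p.2) ^ 2) ∂(volume.prod volume) := by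
  have hi : Integrable φ := hc.integrable_of_hasCompactSupport hsupp
  have hpp := (hi.mul_prod hi).ofReal (𝕜 := ℂ)
  have hg := (integrable_exp_neg_mul_sq (b := 1 / (4 * s)) (by positivity)).ofReal (𝕜 := ℂ)
  have hF := (hpp.mul_prod hg).mul_bdd (c := 1)
    (g := fun q : (ℝ × ℝ) × ℝ => Complex.exp (Complex.I * ((q.1.1 - q.1.2 : ℝ) : ℂ) * q.2))
    (by apply Continuous.aestronglyMeasurable; fun_prop)
    (Filter.Eventually.of_forall fun q => by
      rw [mul_assoc, ← Complex.ofReal_mul, mul_comm, Complex.norm_exp_ofReal_mul_I])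
  have e1 : ∀ ξ : ℝ, ((‖rlPhi φ ξ‖ ^ 2 * Real.exp (-(1 / (4 * s)) * ξ ^ 2) : ℝ) : ℂ) =
      ∫ p : ℝ × ℝ, ((φ p.1 * φ p.2 : ℝ) : ℂ) * ((Real.exp (-(1 / (4 * s)) * ξ ^ 2) : ℝ) : ℂ) *
      Complex.exp (Complex.I * ((p.1 - p.2 : ℝ) : ℂ) * ξ) ∂(volume.prod volume) := by
    intro ξ
    rw [Complex.ofReal_mul, rl_Phi_sq, ← integral_mul_const]
    congr 1; ext p; ring
  have hI := hF.integral_prod_right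
  constructor
  · have h2 := hI.re
    refine h2.congr (Filter.Eventually.of_forall fun ξ => ?_)
    simp only
    refine (congrArg RCLike.re (e1 ξ)).symm.trans ?_
    exact Complex.ofReal_re _
  · apply Complex.ofReal_injective
    rw [← integral_complex_ofReal, funext e1, ← integral_const_mul, ← integral_complex_ofReal]
    refine (integral_integral_swap (f := fun (p : ℝ × ℝ) (ξ : ℝ) => ((φ p.1 * φ p.2 : ℝ) : ℂ) *
      ((Real.exp (-(1 / (4 * s)) * ξ ^ 2) : ℝ) : ℂ) *
      Complex.exp (Complex.I * ((p.1 - p.2 : ℝ) : ℂ) * ξ)) hF).symm.trans ?_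
    congr 1; ext p
    have := rl_gauss s hs (p.1 - p.2)
    calc _ = ((φ p.1 * φ p.2 : ℝ) : ℂ) * ∫ ξ : ℝ, Complex.exp (Complex.I * ((p.1 - p.2 : ℝ) : ℂ) * ξ)
          * Complex.exp (-(1 / (4 * s) : ℝ) * ξ ^ 2) := by
          rw [← integral_const_mul]
          congr 1; ext ξ
          push_cast
          ring
      _ = _ := by rw [this]; push_cast; ring

lemma rl_identity (β : ℝ) (hβ0 : 0 < β) (hβ1 : β < 1) (φ : ℝ → ℝ) (hc : Continuous φ)
    (hsupp : HasCompactSupport φ) (h01 : ∀ x, φ x ≠ 0 → x ∈ Ioo (0 : ℝ) 1) :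
    Real.Gamma ((1 - β) / 2) *
      ∫ p : ℝ × ℝ, φ p.1 * φ p.2 * |p.1 - p.2| ^ (β - 1) ∂(volume.prod volume) =
    (Real.sqrt (4 * Real.pi))⁻¹ * (Real.Gamma (β / 2) * 2 ^ β) *
      ∫ ξ : ℝ, |ξ| ^ (-β) * ‖rlPhi φ ξ‖ ^ 2 := by
  have hK := rl_K_int β hβ0 hβ1 φ hc hsupp h01
  have hne : ∀ᵐ p : ℝ × ℝ ∂(volume.prod volume), p.1 - p.2 ≠ 0 := rl_ne_ae
  have g2 : 0 < Real.Gamma ((1 - β) / 2) := Real.Gamma_pos_of_pos (by linarith)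
  -- the space side
  have hG : Integrable (fun q : (ℝ × ℝ) × ℝ => φ q.1.1 * φ q.1.2 *
      (q.2 ^ ((1 - β) / 2 - 1) * Real.exp (-q.2 * (q.1.1 - q.1.2) ^ 2)))
      ((volume.prod volume).prod (volume.restrict (Ioi (0 : ℝ)))) := by
    rw [integrable_prod_iff (by
      apply Measurable.aestronglyMeasurable
      have := hc.measurable
      fun_prop)]
    constructor
    · filter_upwards [hne] with p hp
      exact (rl_kernel_left_int β hβ1 _ hp).const_mul _
    · refine (hK.norm.const_mul (Real.Gamma ((1 - β) / 2))).congr ?_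
      filter_upwards [hne] with p hp
      have hcongr : ∫ s in Ioi (0 : ℝ), ‖φ p.1 * φ p.2 *
          (s ^ ((1 - β) / 2 - 1) * Real.exp (-s * (p.1 - p.2) ^ 2))‖ =
          ∫ s in Ioi (0 : ℝ), ‖φ p.1 * φ p.2‖ *
          (s ^ ((1 - β) / 2 - 1) * Real.exp (-s * (p.1 - p.2) ^ 2)) := by
        refine setIntegral_congr_fun measurableSet_Ioi (fun s hs => ?_)
        have hs : 0 < s := hs
        rw [norm_mul, Real.norm_of_nonneg (r := s ^ ((1 - β) / 2 - 1) * _) (by positivity)]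
      rw [hcongr, integral_const_mul, rl_kernel_left β hβ1 _ hp, norm_mul,
        Real.norm_of_nonneg (r := |p.1 - p.2| ^ (β - 1)) (by positivity)]
      ring
  have hL : Real.Gamma ((1 - β) / 2) *
      ∫ p : ℝ × ℝ, φ p.1 * φ p.2 * |p.1 - p.2| ^ (β - 1) ∂(volume.prod volume) =
      ∫ p : ℝ × ℝ, (∫ s in Ioi (0 : ℝ), φ p.1 * φ p.2 *
        (s ^ ((1 - β) / 2 - 1) * Real.exp (-s * (p.1 - p.2) ^ 2))) ∂(volume.prod volume) := by
    rw [← integral_const_mul]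
    apply integral_congr_ae
    filter_upwards [hne] with p hp
    rw [integral_const_mul, rl_kernel_left β hβ1 _ hp]
    ring
  -- the frequency side
  have hN : Measurable (rlPhi φ) := by
    have : StronglyMeasurable (rlPhi φ) := by
      unfold rlPhi
      apply StronglyMeasurable.integral_prod_right
        (f := fun (ξ x : ℝ) => (φ x : ℂ) * Complex.exp (-Complex.I * x * ξ))
      apply Continuous.stronglyMeasurable
      unfold Function.uncurry
      fun_prop
    exact this.measurable
  have hinner : ∀ s ∈ Ioi (0 : ℝ),
      ∫ p : ℝ × ℝ, φ p.1 * φ p.2 *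
        (s ^ ((1 - β) / 2 - 1) * Real.exp (-s * (p.1 - p.2) ^ 2)) ∂(volume.prod volume) =
      ∫ ξ : ℝ, s ^ ((1 - β) / 2 - 1) * (Real.sqrt (4 * Real.pi * s))⁻¹ *
        Real.exp (-(1 / (4 * s)) * ξ ^ 2) * ‖rlPhi φ ξ‖ ^ 2 := by
    intro s hs
    have hs : 0 < s := hs
    have h := (rl_gauss_parseval s hs φ hc hsupp).2
    have hq : Real.sqrt (4 * Real.pi * s) ≠ 0 := by positivity
    calc _ = s ^ ((1 - β) / 2 - 1) * ∫ p : ℝ × ℝ, φ p.1 * φ p.2 *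
          Real.exp (-s * (p.1 - p.2) ^ 2) ∂(volume.prod volume) := by
          rw [← integral_const_mul]; congr 1; ext p; ring
      _ = s ^ ((1 - β) / 2 - 1) * (Real.sqrt (4 * Real.pi * s))⁻¹ *
          ∫ ξ, ‖rlPhi φ ξ‖ ^ 2 * Real.exp (-(1 / (4 * s)) * ξ ^ 2) := by
          rw [h]; field_simp
      _ = _ := by rw [← integral_const_mul]; congr 1; ext ξ; ring
  have hQ : Integrable (fun q : ℝ × ℝ =>
      q.1 ^ ((1 - β) / 2 - 1) * (Real.sqrt (4 * Real.pi * q.1))⁻¹ *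
        Real.exp (-(1 / (4 * q.1)) * q.2 ^ 2) * ‖rlPhi φ q.2‖ ^ 2)
      ((volume.restrict (Ioi (0 : ℝ))).prod volume) := by
    rw [integrable_prod_iff (by
      apply Measurable.aestronglyMeasurable
      fun_prop)]
    constructor
    · filter_upwards [ae_restrict_mem measurableSet_Ioi] with s hs
      refine ((rl_gauss_parseval s hs φ hc hsupp).1.const_mul
        (s ^ ((1 - β) / 2 - 1) * (Real.sqrt (4 * Real.pi * s))⁻¹)).congr
        (Filter.Eventually.of_forall fun ξ => ?_)
      simp only
      ring
    · refine hG.integral_prod_right.congr ?_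
      filter_upwards [ae_restrict_mem measurableSet_Ioi] with s hs
      refine (hinner s hs).trans ?_
      congr 1; ext ξ
      have hs : 0 < s := hs
      rw [Real.norm_of_nonneg]
      positivity
  have hae : ∀ᵐ ξ : ℝ, ξ ≠ 0 := by simp [ae_iff]
  rw [hL, integral_integral_swap (f := fun (p : ℝ × ℝ) (s : ℝ) => φ p.1 * φ p.2 *
        (s ^ ((1 - β) / 2 - 1) * Real.exp (-s * (p.1 - p.2) ^ 2))) hG,
    setIntegral_congr_fun measurableSet_Ioi hinner,
    integral_integral_swap (f := fun (s ξ : ℝ) =>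
      s ^ ((1 - β) / 2 - 1) * (Real.sqrt (4 * Real.pi * s))⁻¹ *
        Real.exp (-(1 / (4 * s)) * ξ ^ 2) * ‖rlPhi φ ξ‖ ^ 2) hQ, ← integral_const_mul]
  apply integral_congr_ae
  filter_upwards [hae] with ξ hξ
  rw [integral_mul_const, rl_kernel_right β hβ0 ξ hξ]
  ring

/-- coercivity of the Riemann–Liouville fractional integral: for
`0 < β < 1` and `φ ∈ C_c^∞((0,1))` (extended by zero),
`∫_0^1 (D^{-β}φ) φ ≥ cos(πβ/2) ∫_ℝ |ξ|^{-β} |Fφ(ξ)|² dξ ≥ 0`. -/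
theorem riemannLiouville_coercive (β : ℝ) (hβ0 : 0 < β) (hβ1 : β < 1)
    (φ : ℝ → ℝ) (hφ : ContDiff ℝ (⊤ : ℕ∞) φ) (hsupp : HasCompactSupport φ)
    (hsupp01 : tsupport φ ⊆ Ioo (0 : ℝ) 1) :
    ((∫ x in Ioo (0 : ℝ) 1, RLleft β φ x * φ x)
        ≥ Real.cos (Real.pi * β / 2) * (∫ ξ : ℝ, |ξ| ^ (-β) * ‖FT φ ξ‖ ^ 2)) ∧
      (0 ≤ ∫ x in Ioo (0 : ℝ) 1, RLleft β φ x * φ x) := by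
  have hc := hφ.continuous
  have h01 : ∀ x, φ x ≠ 0 → x ∈ Ioo (0 : ℝ) 1 := fun x hx =>
    hsupp01 (subset_tsupport φ hx)
  have h1 := rl_identity β hβ0 hβ1 φ hc hsupp h01
  rw [rl_K_integral β hβ0 hβ1 φ hc hsupp h01] at h1
  have hcos : 0 < Real.cos (Real.pi * β / 2) := by
    apply Real.cos_pos_of_mem_Ioo
    constructor <;> nlinarith [Real.pi_pos]
  have hFT : ∫ ξ : ℝ, |ξ| ^ (-β) * ‖rlPhi φ ξ‖ ^ 2 =
      2 * Real.pi * ∫ ξ : ℝ, |ξ| ^ (-β) * ‖FT φ ξ‖ ^ 2 := by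
    rw [← integral_const_mul]
    congr 1; ext ξ
    rw [rl_FT]; ring
  have hnn : 0 ≤ ∫ ξ : ℝ, |ξ| ^ (-β) * ‖FT φ ξ‖ ^ 2 :=
    integral_nonneg fun ξ => by positivity
  have key : (∫ x in Ioo (0 : ℝ) 1, RLleft β φ x * φ x) =
      Real.cos (Real.pi * β / 2) * (∫ ξ : ℝ, |ξ| ^ (-β) * ‖FT φ ξ‖ ^ 2) := by
    have g1 := Real.Gamma_pos_of_pos hβ0
    have g2 : 0 < Real.Gamma ((1 - β) / 2) := Real.Gamma_pos_of_pos (by linarith)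
    have hs4 : Real.sqrt (4 * Real.pi) = 2 * Real.sqrt Real.pi := by
      rw [Real.sqrt_mul (by norm_num), show (4 : ℝ) = 2 ^ 2 by norm_num,
        Real.sqrt_sq (by norm_num)]
    have hsp : 0 < Real.sqrt Real.pi := by positivity
    have hs : Real.pi = Real.sqrt Real.pi * Real.sqrt Real.pi := (Real.mul_self_sqrt Real.pi_pos.le).symm
    have hq : (2 * Real.sqrt Real.pi)⁻¹ * (2 * Real.pi) = Real.sqrt Real.pi := by
      nth_rewrite 2 [hs]
      field_simp
    rw [hFT, hs4] at h1
    rw [← rl_gamma_const β hβ0 hβ1, div_mul_eq_mul_div, eq_div_iff (by positivity)]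
    linear_combination h1 + (Real.Gamma (β / 2) * 2 ^ β *
      ∫ ξ : ℝ, |ξ| ^ (-β) * ‖FT φ ξ‖ ^ 2) * hq
  rw [key]
  exact ⟨le_refl _, by positivity⟩
end

section
/- Let s ∈ (0, 1/2) and 𝒯 a quasi-uniform partition of I=(0,1) into N intervals of length ≃ 1/N. Then for all v ∈ H^s(I), ‖v‖_{H^s(I)} ≤ C N^s (∑_{T∈𝒯} ‖v|_T‖²_{H^s(T)})^{1/2}, with C depending only on s and the quasi-uniformity constant. -/
open MeasureTheory Set

/-- Squared `L²` norm on the interval `(a,b)`. -/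
noncomputable def L2sq (a b : ℝ) (f : ℝ → ℝ) : ENNReal :=
  ∫⁻ x in Ioo a b, ENNReal.ofReal ((f x) ^ 2)

/-- Squared Sobolev–Slobodeckij seminorm of order `s` on the interval `(a,b)`. -/
noncomputable def SlobSq (s a b : ℝ) (f : ℝ → ℝ) : ENNReal :=
  ∫⁻ p in (Ioo a b) ×ˢ (Ioo a b),
    ENNReal.ofReal ((f p.1 - f p.2) ^ 2 / |p.1 - p.2| ^ (1 + 2 * s))

/-- Squared `H^s` norm on the interval `(a,b)`. -/
noncomputable def HsSq (s a b : ℝ) (f : ℝ → ℝ) : ENNReal :=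
  L2sq a b f + SlobSq s a b f


lemma kerIoi (s : ℝ) (hs0 : 0 < s) (c : ℝ) (hc : 0 < c) :
    ∫⁻ t in Ioi c, ENNReal.ofReal (t ^ (-(1 + 2 * s))) = ENNReal.ofReal (c ^ (-(2 * s)) / (2 * s)) := by
  rw [← ofReal_integral_eq_lintegral_ofReal, integral_Ioi_rpow_of_lt (by linarith) hc]
  · congr 1
    rw [show -(1 + 2 * s) + 1 = -(2 * s) by ring, neg_div_neg_eq]
  · exact integrableOn_Ioi_rpow_of_lt (by linarith) hc
  · filter_upwards [ae_restrict_mem measurableSet_Ioi] with t ht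
    exact Real.rpow_nonneg (hc.trans ht).le _

lemma kerIoo (s : ℝ) (hs0 : 0 < s) (y : ℝ) (hy : 0 < y) :
    ∫⁻ t in Ioo (y / 2) y, ENNReal.ofReal (t ^ (-(1 + 2 * s)))
      = ENNReal.ofReal ((2 ^ (2 * s) - 1) / (2 * s)) * ENNReal.ofReal (y ^ (-(2 * s))) := by
  have h0 : (0 : ℝ) ∉ uIcc (y / 2) y := by
    rw [uIcc_of_le (by linarith)]; intro h; linarith [h.1]
  have hII : IntervalIntegrable (fun t : ℝ => t ^ (-(1 + 2 * s))) volume (y / 2) y :=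
    intervalIntegral.intervalIntegrable_rpow (Or.inr h0)
  rw [Measure.restrict_congr_set Ioo_ae_eq_Ioc, ← ofReal_integral_eq_lintegral_ofReal,
    ← intervalIntegral.integral_of_le (by linarith), integral_rpow (Or.inr ⟨by linarith, h0⟩),
    ← ENNReal.ofReal_mul']
  · congr 1
    rw [show -(1 + 2 * s) + 1 = -(2 * s) by ring, Real.div_rpow hy.le (by norm_num),
      Real.rpow_neg (by norm_num : (0 : ℝ) ≤ 2)]
    have := Real.rpow_pos_of_pos (by norm_num : (0 : ℝ) < 2) (2 * s)
    field_simp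
    ring
  · positivity
  · exact (intervalIntegrable_iff_integrableOn_Ioc_of_le (by linarith)).1 hII
  · filter_upwards [ae_restrict_mem measurableSet_Ioc] with t ht
    exact Real.rpow_nonneg (by linarith [ht.1]) _

lemma kappa_lt (s : ℝ) (hs0 : 0 < s) (hs2 : s < 1 / 2) : ((2 : ℝ) ^ (2 * s) - 1) / (2 * s) < 1 := by
  rw [div_lt_one (by linarith)]
  have := rpow_one_add_lt_one_add_mul_self (s := 1) (by norm_num) (by norm_num)
    (p := 2 * s) (by linarith) (by linarith)
  norm_num at this
  linarith

lemma kappa_pos (s : ℝ) (hs0 : 0 < s) : 0 < ((2 : ℝ) ^ (2 * s) - 1) / (2 * s) := by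
  have := Real.one_lt_rpow (x := 2) (z := 2 * s) (by norm_num) (by linarith)
  apply div_pos <;> linarith

lemma slob_meas (s : ℝ) (v : ℝ → ℝ) (hv : Measurable v) :
    Measurable (fun p : ℝ × ℝ =>
      ENNReal.ofReal ((v p.1 - v p.2) ^ 2 / |p.1 - p.2| ^ (1 + 2 * s))) := by
  have h1 : Measurable fun p : ℝ × ℝ => v p.1 := hv.comp measurable_fst
  have h2 : Measurable fun p : ℝ × ℝ => v p.2 := hv.comp measurable_snd
  refine ENNReal.measurable_ofReal.comp (((h1.sub h2).pow_const 2).div ?_)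
  refine Measurable.pow_const ?_ _
  exact (continuous_abs.comp (continuous_fst.sub continuous_snd)).measurable

lemma slob_iter (s a b : ℝ) (v : ℝ → ℝ) (hv : Measurable v) :
    SlobSq s a b v = ∫⁻ x in Ioo a b, ∫⁻ y in Ioo a b,
      ENNReal.ofReal ((v x - v y) ^ 2 / |x - y| ^ (1 + 2 * s)) := by
  unfold SlobSq
  rw [Measure.volume_eq_prod, setLIntegral_prod]
  exact (slob_meas s v hv).aemeasurable

/-- pointwise estimate -/
lemma pw (s δ : ℝ) (hs0 : 0 < s) (hδ : 0 < δ) (a b x y : ℝ) (hx : 0 < x) (h1 : x < y) (h2 : y < 2 * x) :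
    ENNReal.ofReal (a ^ 2) * ENNReal.ofReal (x ^ (-(1 + 2 * s))) ≤
      ENNReal.ofReal (1 + δ) * (ENNReal.ofReal (b ^ 2) * ENNReal.ofReal (x ^ (-(1 + 2 * s))))
      + ENNReal.ofReal (1 + 1 / δ) * ENNReal.ofReal ((a - b) ^ 2 / |x - y| ^ (1 + 2 * s)) := by
  have hk : 0 < x ^ (-(1 + 2 * s)) := Real.rpow_pos_of_pos hx _
  have hxy : 0 < |x - y| := abs_pos.2 (by linarith)
  have hle : |x - y| ≤ x := by rw [abs_of_neg (by linarith)]; linarith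
  have hk2 : x ^ (-(1 + 2 * s)) ≤ (|x - y| ^ (1 + 2 * s))⁻¹ := by
    rw [Real.rpow_neg hx.le]
    exact inv_anti₀ (Real.rpow_pos_of_pos hxy _) (Real.rpow_le_rpow hxy.le hle (by linarith))
  rw [← ENNReal.ofReal_mul (by positivity), ← ENNReal.ofReal_mul (by positivity),
    ← ENNReal.ofReal_mul (by positivity), ← ENNReal.ofReal_mul (by positivity),
    ← ENNReal.ofReal_add (by positivity) (by positivity)]
  apply ENNReal.ofReal_le_ofReal
  have hab : a ^ 2 ≤ (1 + δ) * b ^ 2 + (1 + 1 / δ) * (a - b) ^ 2 := by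
    have : (1 + δ) * b ^ 2 + (1 + 1 / δ) * (a - b) ^ 2 - a ^ 2 = (δ * b - (a - b)) ^ 2 / δ := by
      field_simp; ring
    have h3 : 0 ≤ (δ * b - (a - b)) ^ 2 / δ := by positivity
    linarith
  calc a ^ 2 * x ^ (-(1 + 2 * s)) ≤ ((1 + δ) * b ^ 2 + (1 + 1 / δ) * (a - b) ^ 2) * x ^ (-(1 + 2 * s)) := by
        gcongr
    _ = (1 + δ) * (b ^ 2 * x ^ (-(1 + 2 * s))) + (1 + 1 / δ) * ((a - b) ^ 2 * x ^ (-(1 + 2 * s))) := by ring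
    _ ≤ _ := by
        rw [div_eq_mul_inv ((a - b) ^ 2)]
        gcongr

lemma schur (s ε h : ℝ) (hs0 : 0 < s) (hε : 0 < ε) (w : ℝ → ENNReal) (hw : Measurable w) :
    ∫⁻ x in Ioo ε (h / 2), ∫⁻ y in Ioo x (2 * x), w y * ENNReal.ofReal (x ^ (-(1 + 2 * s)))
    ≤ ENNReal.ofReal ((2 ^ (2 * s) - 1) / (2 * s)) *
      ∫⁻ y in Ioo ε h, w y * ENNReal.ofReal (y ^ (-(2 * s))) := by
  have hkm : Measurable fun x : ℝ => ENNReal.ofReal (x ^ (-(1 + 2 * s))) :=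
    ENNReal.measurable_ofReal.comp (measurable_id.pow_const _)
  have hkm2 : Measurable fun x : ℝ => ENNReal.ofReal (x ^ (-(2 * s))) :=
    ENNReal.measurable_ofReal.comp (measurable_id.pow_const _)
  let E : Set (ℝ × ℝ) := {p | ε < p.1 ∧ p.1 < h / 2 ∧ p.1 < p.2 ∧ p.2 < 2 * p.1}
  have hE : MeasurableSet E := by
    apply IsOpen.measurableSet
    refine (isOpen_lt continuous_const continuous_fst).inter
      ((isOpen_lt continuous_fst continuous_const).inter
      ((isOpen_lt continuous_fst continuous_snd).inter
      (isOpen_lt continuous_snd (continuous_const.mul continuous_fst))))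
  let F : ℝ × ℝ → ENNReal := E.indicator fun p => w p.2 * ENNReal.ofReal (p.1 ^ (-(1 + 2 * s)))
  have hF : Measurable F :=
    ((hw.comp measurable_snd).mul (hkm.comp measurable_fst)).indicator hE
  calc ∫⁻ x in Ioo ε (h / 2), ∫⁻ y in Ioo x (2 * x), w y * ENNReal.ofReal (x ^ (-(1 + 2 * s)))
      ≤ ∫⁻ x, ∫⁻ y, F (x, y) := by
        rw [← lintegral_indicator measurableSet_Ioo]
        apply lintegral_mono
        intro x
        by_cases hx : x ∈ Ioo ε (h / 2)
        · simp only [indicator_of_mem hx]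
          rw [← lintegral_indicator measurableSet_Ioo]
          apply lintegral_mono
          intro y
          by_cases hy : y ∈ Ioo x (2 * x)
          · have : (x, y) ∈ E := ⟨hx.1, hx.2, hy.1, hy.2⟩
            simp only [indicator_of_mem hy, F, indicator_of_mem this]; exact le_rfl
          · simp [indicator_of_notMem hy]
        · simp [indicator_of_notMem hx]
    _ = ∫⁻ y, ∫⁻ x, F (x, y) := lintegral_lintegral_swap (f := fun x y => F (x, y)) hF.aemeasurable
    _ ≤ ∫⁻ y in Ioo ε h, w y * ∫⁻ x in Ioo (y / 2) y, ENNReal.ofReal (x ^ (-(1 + 2 * s))) := by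
        rw [← lintegral_indicator measurableSet_Ioo]
        apply lintegral_mono
        intro y
        by_cases hy : y ∈ Ioo ε h
        · simp only [indicator_of_mem hy]
          rw [← lintegral_const_mul _ hkm, ← lintegral_indicator measurableSet_Ioo]
          apply lintegral_mono
          intro x
          by_cases hx : (x, y) ∈ E
          · have : x ∈ Ioo (y / 2) y := ⟨by linarith [hx.2.2.2], hx.2.2.1⟩
            simp only [indicator_of_mem this, F, indicator_of_mem hx]; exact le_rfl
          · simp [F, indicator_of_notMem hx]
        · have : ∀ x, F (x, y) = 0 := by
            intro x
            apply indicator_of_notMem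
            rintro ⟨h1, h2, h3, h4⟩
            simp only at h1 h2 h3 h4
            exact hy ⟨by linarith, by linarith⟩
          simp [this]
    _ = ∫⁻ y in Ioo ε h, ENNReal.ofReal ((2 ^ (2 * s) - 1) / (2 * s)) *
          (w y * ENNReal.ofReal (y ^ (-(2 * s)))) := by
        apply setLIntegral_congr_fun measurableSet_Ioo
        intro y hy
        simp only
        rw [kerIoo s hs0 y (hε.trans hy.1)]
        ring
    _ = _ := by
        rw [lintegral_const_mul]
        exact hw.mul hkm2

lemma absorb (F A : ENNReal) (θ : ℝ) (h0 : 0 ≤ θ) (h1 : θ < 1) (hF : F ≠ ⊤)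
    (h : F ≤ A + ENNReal.ofReal θ * F) : F ≤ ENNReal.ofReal (1 / (1 - θ)) * A := by
  by_cases hA : A = ⊤
  · rw [hA, ENNReal.mul_top]
    · exact le_top
    · have : 0 < 1 / (1 - θ) := by apply div_pos <;> linarith
      simpa using this
  lift F to NNReal using hF
  lift A to NNReal using hA
  have hF' : (F : ENNReal) = ENNReal.ofReal F := by simp
  have hA' : (A : ENNReal) = ENNReal.ofReal A := by simp
  have h' : (F : ℝ) ≤ A + θ * F := by
    rw [hF', hA', ← ENNReal.ofReal_mul h0, ← ENNReal.ofReal_add (by positivity) (by positivity)] at h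
    exact (ENNReal.ofReal_le_ofReal_iff (by positivity)).1 h
  have hp : 0 < 1 - θ := by linarith
  rw [hF', hA', ← ENNReal.ofReal_mul (by positivity)]
  apply ENNReal.ofReal_le_ofReal
  rw [div_mul_eq_mul_div, le_div_iff₀ hp]
  linarith

lemma hardy_trunc (s δ : ℝ) (hs0 : 0 < s) (hs2 : s < 1 / 2) (hδ : 0 < δ) (ε h : ℝ) (hε : 0 < ε)
    (hh : ε < h / 2) (v : ℝ → ℝ) (hv : Measurable v) :
    ∫⁻ x in Ioo ε h, ENNReal.ofReal (v x ^ 2) * ENNReal.ofReal (x ^ (-(2 * s))) ≤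
      (2 * ENNReal.ofReal (h ^ (-(2 * s))) * L2sq 0 h v
        + ENNReal.ofReal (1 + 1 / δ) * SlobSq s 0 h v)
      + ENNReal.ofReal ((1 + δ) * ((2 ^ (2 * s) - 1) / (2 * s))) *
      ∫⁻ x in Ioo ε h, ENNReal.ofReal (v x ^ 2) * ENNReal.ofReal (x ^ (-(2 * s))) := by
  have hh0 : 0 < h := by linarith
  have hw : Measurable fun x => ENNReal.ofReal (v x ^ 2) :=
    ENNReal.measurable_ofReal.comp (hv.pow_const 2)
  have hkm : Measurable fun x : ℝ => ENNReal.ofReal (x ^ (-(1 + 2 * s))) :=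
    ENNReal.measurable_ofReal.comp (measurable_id.pow_const _)
  have hG := slob_meas s v hv
  -- split
  have h1 : ∫⁻ x in Ioo ε h, ENNReal.ofReal (v x ^ 2) * ENNReal.ofReal (x ^ (-(2 * s))) ≤
      (∫⁻ x in Ioo ε (h / 2), ENNReal.ofReal (v x ^ 2) * ENNReal.ofReal (x ^ (-(2 * s)))) +
      ∫⁻ x in Ico (h / 2) h, ENNReal.ofReal (v x ^ 2) * ENNReal.ofReal (x ^ (-(2 * s))) := by
    refine le_trans (lintegral_mono_set ?_) (lintegral_union_le _ _ _)
    intro x hx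
    rcases lt_or_ge x (h / 2) with h' | h'
    · exact Or.inl ⟨hx.1, h'⟩
    · exact Or.inr ⟨h', hx.2⟩
  -- far part
  have h2 : ∫⁻ x in Ico (h / 2) h, ENNReal.ofReal (v x ^ 2) * ENNReal.ofReal (x ^ (-(2 * s))) ≤
      2 * ENNReal.ofReal (h ^ (-(2 * s))) * L2sq 0 h v := by
    unfold L2sq
    calc _ ≤ ∫⁻ x in Ico (h / 2) h, 2 * ENNReal.ofReal (h ^ (-(2 * s))) * ENNReal.ofReal (v x ^ 2) := by
          apply setLIntegral_mono' measurableSet_Ico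
          intro x hx
          rw [mul_comm]
          gcongr
          rw [← ENNReal.ofReal_ofNat, ← ENNReal.ofReal_mul (by norm_num)]
          apply ENNReal.ofReal_le_ofReal
          calc x ^ (-(2 * s)) ≤ (h / 2) ^ (-(2 * s)) :=
                Real.rpow_le_rpow_of_nonpos (by linarith) hx.1 (by linarith)
            _ = 2 ^ (2 * s) * h ^ (-(2 * s)) := by
                rw [Real.div_rpow hh0.le (by norm_num), Real.rpow_neg (by norm_num : (0 : ℝ) ≤ 2),
                  div_inv_eq_mul, mul_comm]
            _ ≤ 2 * h ^ (-(2 * s)) := by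
                gcongr
                calc (2 : ℝ) ^ (2 * s) ≤ 2 ^ (1 : ℝ) :=
                      Real.rpow_le_rpow_of_exponent_le (by norm_num) (by linarith)
                  _ = 2 := by norm_num
      _ = 2 * ENNReal.ofReal (h ^ (-(2 * s))) * ∫⁻ x in Ico (h / 2) h, ENNReal.ofReal (v x ^ 2) :=
          lintegral_const_mul _ hw
      _ ≤ _ := by
          refine mul_le_mul_right (lintegral_mono_set ?_) _
          intro x hx
          exact ⟨by have := hx.1; linarith, hx.2⟩
  -- near part
  have h3 : ∫⁻ x in Ioo ε (h / 2), ENNReal.ofReal (v x ^ 2) * ENNReal.ofReal (x ^ (-(2 * s))) ≤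
      ∫⁻ x in Ioo ε (h / 2), (ENNReal.ofReal (1 + δ) *
        (∫⁻ y in Ioo x (2 * x), ENNReal.ofReal (v y ^ 2) * ENNReal.ofReal (x ^ (-(1 + 2 * s)))) +
        ENNReal.ofReal (1 + 1 / δ) * ∫⁻ y in Ioo 0 h,
          ENNReal.ofReal ((v x - v y) ^ 2 / |x - y| ^ (1 + 2 * s))) := by
    apply setLIntegral_mono' measurableSet_Ioo
    intro x hx
    have hx0 : 0 < x := hε.trans hx.1
    have hGx : Measurable fun y => ENNReal.ofReal ((v x - v y) ^ 2 / |x - y| ^ (1 + 2 * s)) :=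
      Measurable.comp (f := fun y : ℝ => (x, y)) hG (by fun_prop)
    calc ENNReal.ofReal (v x ^ 2) * ENNReal.ofReal (x ^ (-(2 * s)))
        = ∫⁻ y in Ioo x (2 * x), ENNReal.ofReal (v x ^ 2) * ENNReal.ofReal (x ^ (-(1 + 2 * s))) := by
          rw [setLIntegral_const, Real.volume_Ioo, mul_assoc, ← ENNReal.ofReal_mul (p := x ^ (-(1 + 2 * s))) (by positivity)]
          congr 2
          rw [show 2 * x - x = x ^ (1 : ℝ) by rw [Real.rpow_one]; ring, ← Real.rpow_add hx0]
          congr 1; ring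
      _ ≤ ∫⁻ y in Ioo x (2 * x), (ENNReal.ofReal (1 + δ) *
            (ENNReal.ofReal (v y ^ 2) * ENNReal.ofReal (x ^ (-(1 + 2 * s))))
          + ENNReal.ofReal (1 + 1 / δ) * ENNReal.ofReal ((v x - v y) ^ 2 / |x - y| ^ (1 + 2 * s))) := by
          apply setLIntegral_mono' measurableSet_Ioo
          intro y hy
          exact pw s δ hs0 hδ _ _ x y hx0 hy.1 hy.2
      _ = ENNReal.ofReal (1 + δ) *
        (∫⁻ y in Ioo x (2 * x), ENNReal.ofReal (v y ^ 2) * ENNReal.ofReal (x ^ (-(1 + 2 * s)))) +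
        ENNReal.ofReal (1 + 1 / δ) * ∫⁻ y in Ioo x (2 * x),
          ENNReal.ofReal ((v x - v y) ^ 2 / |x - y| ^ (1 + 2 * s)) := by
          rw [lintegral_add_right _ (hGx.const_mul _), lintegral_const_mul _ (hw.mul_const _),
            lintegral_const_mul _ hGx]
      _ ≤ _ := by
          refine add_le_add le_rfl (mul_le_mul_right (lintegral_mono_set ?_) _)
          intro y hy
          exact ⟨hx0.trans hy.1, by have := hy.2; have := hx.2; linarith⟩
  have hGi : Measurable fun x => ∫⁻ y in Ioo 0 h,
          ENNReal.ofReal ((v x - v y) ^ 2 / |x - y| ^ (1 + 2 * s)) :=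
    Measurable.lintegral_prod_right' (ν := volume.restrict (Ioo 0 h)) hG
  have h4 : ∫⁻ x in Ioo ε (h / 2), (ENNReal.ofReal (1 + δ) *
        (∫⁻ y in Ioo x (2 * x), ENNReal.ofReal (v y ^ 2) * ENNReal.ofReal (x ^ (-(1 + 2 * s)))) +
        ENNReal.ofReal (1 + 1 / δ) * ∫⁻ y in Ioo 0 h,
          ENNReal.ofReal ((v x - v y) ^ 2 / |x - y| ^ (1 + 2 * s))) ≤
      ENNReal.ofReal ((1 + δ) * ((2 ^ (2 * s) - 1) / (2 * s))) *
      (∫⁻ x in Ioo ε h, ENNReal.ofReal (v x ^ 2) * ENNReal.ofReal (x ^ (-(2 * s)))) +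
      ENNReal.ofReal (1 + 1 / δ) * SlobSq s 0 h v := by
    rw [lintegral_add_right _ (hGi.const_mul _), lintegral_const_mul _ hGi,
      lintegral_const_mul' _ _ ENNReal.ofReal_ne_top, ENNReal.ofReal_mul (by positivity), mul_assoc,
      slob_iter s 0 h v hv]
    refine add_le_add (mul_le_mul_right (schur s ε h hs0 hε _ hw) _)
      (mul_le_mul_right (lintegral_mono_set ?_) _)
    exact Ioo_subset_Ioo hε.le (by linarith)
  calc _ ≤ _ := h1
    _ ≤ _ := add_le_add (h3.trans h4) h2
    _ = _ := by ring

lemma hardy0 (s : ℝ) (hs0 : 0 < s) (hs2 : s < 1 / 2) :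
    ∃ K : ℝ, 0 < K ∧ ∀ h : ℝ, 0 < h → ∀ v : ℝ → ℝ, Measurable v →
    ∫⁻ x in Ioo 0 h, ENNReal.ofReal (v x ^ 2) * ENNReal.ofReal (x ^ (-(2 * s))) ≤
      ENNReal.ofReal K * (ENNReal.ofReal (h ^ (-(2 * s))) * L2sq 0 h v + SlobSq s 0 h v) := by
  set κ : ℝ := (2 ^ (2 * s) - 1) / (2 * s) with hκ
  have k0 : 0 < κ := kappa_pos s hs0
  have k1 : κ < 1 := kappa_lt s hs0 hs2
  set δ : ℝ := (1 - κ) / (2 * κ) with hδd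
  have hδ : 0 < δ := div_pos (by linarith) (by linarith)
  have hθ : (1 + δ) * κ = (1 + κ) / 2 := by rw [hδd]; field_simp; ring
  have hθ1 : (1 + δ) * κ < 1 := by rw [hθ]; linarith
  have hM : 0 < 1 / (1 - (1 + δ) * κ) := div_pos one_pos (by linarith)
  refine ⟨1 / (1 - (1 + δ) * κ) * (2 + 1 / δ), by positivity, ?_⟩
  intro h hh v hv
  set R := ENNReal.ofReal (h ^ (-(2 * s))) * L2sq 0 h v + SlobSq s 0 h v with hR
  by_cases hL : L2sq 0 h v = ⊤
  · have : R = ⊤ := by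
      rw [hR, hL, ENNReal.mul_top, top_add]
      have : 0 < h ^ (-(2 * s)) := Real.rpow_pos_of_pos hh _
      simpa using this
    rw [this, ENNReal.mul_top]
    · exact le_top
    · have : 0 < 1 / (1 - (1 + δ) * κ) * (2 + 1 / δ) := by positivity
      exact (ENNReal.ofReal_pos.2 this).ne'
  have hw : Measurable fun x => ENNReal.ofReal (v x ^ 2) :=
    ENNReal.measurable_ofReal.comp (hv.pow_const 2)
  have key : ∀ ε, 0 < ε → ε < h / 2 →
      ∫⁻ x in Ioo ε h, ENNReal.ofReal (v x ^ 2) * ENNReal.ofReal (x ^ (-(2 * s))) ≤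
      ENNReal.ofReal (1 / (1 - (1 + δ) * κ) * (2 + 1 / δ)) * R := by
    intro ε hε hεh
    have hfin : ∫⁻ x in Ioo ε h, ENNReal.ofReal (v x ^ 2) * ENNReal.ofReal (x ^ (-(2 * s))) ≠ ⊤ := by
      have : ∫⁻ x in Ioo ε h, ENNReal.ofReal (v x ^ 2) * ENNReal.ofReal (x ^ (-(2 * s))) ≤
          L2sq 0 h v * ENNReal.ofReal (ε ^ (-(2 * s))) := by
        unfold L2sq
        rw [← lintegral_mul_const _ hw]
        refine le_trans (setLIntegral_mono' measurableSet_Ioo (g := fun x => ENNReal.ofReal (v x ^ 2) * ENNReal.ofReal (ε ^ (-(2 * s)))) ?_) (lintegral_mono_set ?_)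
        · intro x hx
          refine mul_le_mul_right (ENNReal.ofReal_le_ofReal ?_) _
          exact Real.rpow_le_rpow_of_nonpos hε hx.1.le (by linarith)
        · exact Ioo_subset_Ioo_left hε.le
      exact ne_top_of_le_ne_top (ENNReal.mul_ne_top hL ENNReal.ofReal_ne_top) this
    refine le_trans (absorb _ _ _ (by positivity) hθ1 hfin
      (hardy_trunc s δ hs0 hs2 hδ ε h hε hεh v hv)) ?_
    rw [ENNReal.ofReal_mul hM.le, mul_assoc _ _ R]
    refine mul_le_mul_right ?_ _
    rw [hR, mul_add, ← mul_assoc]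
    have e2 : (2 : ENNReal) ≤ ENNReal.ofReal (2 + 1 / δ) := by
      rw [← ENNReal.ofReal_ofNat]
      apply ENNReal.ofReal_le_ofReal
      have : 0 < 1 / δ := by positivity
      linarith
    gcongr
    norm_num
  have hU : Ioo 0 h = ⋃ n : ℕ, Ioo (h / (n + 3)) h := by
    ext x
    simp only [mem_iUnion, mem_Ioo]
    constructor
    · rintro ⟨h1, h2⟩
      obtain ⟨n, hn⟩ := exists_nat_gt (h / x)
      refine ⟨n, ?_, h2⟩
      rw [div_lt_iff₀ (by positivity)]
      rw [div_lt_iff₀ h1] at hn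
      nlinarith
    · rintro ⟨n, h1, h2⟩
      exact ⟨lt_trans (by positivity) h1, h2⟩
  rw [hU, setLIntegral_iUnion_of_directed]
  · apply iSup_le
    intro n
    apply key
    · positivity
    · apply div_lt_div_of_pos_left hh (by norm_num)
      have : (0 : ℝ) ≤ n := Nat.cast_nonneg n
      linarith
  · apply Monotone.directed_le
    intro m n hmn
    apply Ioo_subset_Ioo_left
    have : (m : ℝ) ≤ n := by exact_mod_cast hmn
    gcongr

lemma shiftL (a b : ℝ) (f : ℝ → ENNReal) :
    ∫⁻ x in Ioo 0 (b - a), f (a + x) = ∫⁻ x in Ioo a b, f x := by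
  rw [← lintegral_indicator measurableSet_Ioo, ← lintegral_indicator measurableSet_Ioo,
    ← lintegral_add_left_eq_self ((Ioo a b).indicator f) a]
  refine lintegral_congr fun x => ?_
  simp only [indicator, mem_Ioo]
  have : (0 < x ∧ x < b - a) ↔ (a < a + x ∧ a + x < b) := by
    constructor <;> rintro ⟨h1, h2⟩ <;> constructor <;> linarith
  simp only [this]

lemma shiftR (a b : ℝ) (f : ℝ → ENNReal) :
    ∫⁻ x in Ioo 0 (b - a), f (b - x) = ∫⁻ x in Ioo a b, f x := by
  rw [← lintegral_indicator measurableSet_Ioo, ← lintegral_indicator measurableSet_Ioo,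
    ← lintegral_sub_left_eq_self ((Ioo a b).indicator f) b]
  refine lintegral_congr fun x => ?_
  simp only [indicator, mem_Ioo]
  have : (0 < x ∧ x < b - a) ↔ (a < b - x ∧ b - x < b) := by
    constructor <;> rintro ⟨h1, h2⟩ <;> constructor <;> linarith
  simp only [this]

lemma hardyL (s : ℝ) (K : ℝ) (hK : ∀ h : ℝ, 0 < h → ∀ v : ℝ → ℝ, Measurable v →
    ∫⁻ x in Ioo 0 h, ENNReal.ofReal (v x ^ 2) * ENNReal.ofReal (x ^ (-(2 * s))) ≤
      ENNReal.ofReal K * (ENNReal.ofReal (h ^ (-(2 * s))) * L2sq 0 h v + SlobSq s 0 h v))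
    (a b : ℝ) (hab : a < b) (v : ℝ → ℝ) (hv : Measurable v) :
    ∫⁻ x in Ioo a b, ENNReal.ofReal (v x ^ 2) * ENNReal.ofReal ((x - a) ^ (-(2 * s))) ≤
      ENNReal.ofReal K * (ENNReal.ofReal ((b - a) ^ (-(2 * s))) * L2sq a b v + SlobSq s a b v) := by
  have hv' : Measurable fun x => v (a + x) := hv.comp (measurable_const_add a)
  have := hK (b - a) (by linarith) (fun x => v (a + x)) hv'
  convert this using 1
  · rw [← shiftL]
    simp
  · rw [slob_iter s a b v hv, slob_iter s 0 (b - a) _ hv', ← shiftL a b]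
    simp_rw [← shiftL a b]
    unfold L2sq
    rw [← shiftL a b]
    simp

lemma hardyR (s : ℝ) (K : ℝ) (hK : ∀ h : ℝ, 0 < h → ∀ v : ℝ → ℝ, Measurable v →
    ∫⁻ x in Ioo 0 h, ENNReal.ofReal (v x ^ 2) * ENNReal.ofReal (x ^ (-(2 * s))) ≤
      ENNReal.ofReal K * (ENNReal.ofReal (h ^ (-(2 * s))) * L2sq 0 h v + SlobSq s 0 h v))
    (a b : ℝ) (hab : a < b) (v : ℝ → ℝ) (hv : Measurable v) :
    ∫⁻ x in Ioo a b, ENNReal.ofReal (v x ^ 2) * ENNReal.ofReal ((b - x) ^ (-(2 * s))) ≤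
      ENNReal.ofReal K * (ENNReal.ofReal ((b - a) ^ (-(2 * s))) * L2sq a b v + SlobSq s a b v) := by
  have hv' : Measurable fun x => v (b - x) := hv.comp (measurable_const_sub b)
  have := hK (b - a) (by linarith) (fun x => v (b - x)) hv'
  convert this using 1
  · rw [← shiftR]
    simp
  · rw [slob_iter s a b v hv, slob_iter s 0 (b - a) _ hv', ← shiftR a b]
    simp_rw [← shiftR a b]
    unfold L2sq
    rw [← shiftR a b]
    have e : ∀ x y : ℝ, |b - x - (b - y)| = |x - y| := by
      intro x y; rw [show b - x - (b - y) = -(x - y) by ring, abs_neg]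
    simp only [e]

lemma kerL (s : ℝ) (hs0 : 0 < s) (a x : ℝ) (hx : a < x) :
    ∫⁻ y in Iic a, ENNReal.ofReal (|x - y| ^ (-(1 + 2 * s)))
      = ENNReal.ofReal (1 / (2 * s)) * ENNReal.ofReal ((x - a) ^ (-(2 * s))) := by
  rw [← ENNReal.ofReal_mul (by positivity), one_div_mul_eq_div, ← kerIoi s hs0 (x - a) (by linarith),
    Measure.restrict_congr_set Ioi_ae_eq_Ici, ← lintegral_indicator measurableSet_Iic,
    ← lintegral_indicator measurableSet_Ici, ← lintegral_sub_left_eq_self _ x]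
  refine lintegral_congr fun t => ?_
  by_cases ht : t ∈ Ici (x - a)
  · have ht' := mem_Ici.1 ht
    rw [indicator_of_mem (show x - t ∈ Iic a by simp only [mem_Iic]; linarith), indicator_of_mem ht,
      show x - (x - t) = t by ring, abs_of_pos (by linarith)]
  · rw [indicator_of_notMem (by simp only [mem_Iic]; intro h; apply ht; rw [mem_Ici]; linarith),
      indicator_of_notMem ht]

lemma kerR (s : ℝ) (hs0 : 0 < s) (b x : ℝ) (hx : x < b) :
    ∫⁻ y in Ici b, ENNReal.ofReal (|x - y| ^ (-(1 + 2 * s)))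
      = ENNReal.ofReal (1 / (2 * s)) * ENNReal.ofReal ((b - x) ^ (-(2 * s))) := by
  rw [← ENNReal.ofReal_mul (by positivity), one_div_mul_eq_div, ← kerIoi s hs0 (b - x) (by linarith),
    Measure.restrict_congr_set Ioi_ae_eq_Ici, ← lintegral_indicator measurableSet_Ici,
    ← lintegral_indicator measurableSet_Ici, ← lintegral_add_left_eq_self _ x]
  refine lintegral_congr fun t => ?_
  by_cases ht : t ∈ Ici (b - x)
  · have ht' := mem_Ici.1 ht
    rw [indicator_of_mem (show x + t ∈ Ici b by simp only [mem_Ici]; linarith), indicator_of_mem ht,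
      show x - (x + t) = -t by ring, abs_neg, abs_of_pos (by linarith)]
  · rw [indicator_of_notMem (by simp only [mem_Ici]; intro h; apply ht; rw [mem_Ici]; linarith),
      indicator_of_notMem ht]

lemma cover (x : ℕ → ℝ) (f : ℝ → ENNReal) (n : ℕ) :
    ∫⁻ t in Ioo (x 0) (x n), f t ≤ ∑ i ∈ Finset.range n, ∫⁻ t in Ioo (x i) (x (i + 1)), f t := by
  simp_rw [Measure.restrict_congr_set Ioo_ae_eq_Ioc]
  induction n with
  | zero => simp
  | succ n ih =>
    rw [Finset.sum_range_succ]
    refine le_trans ?_ (add_le_add ih le_rfl)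
    exact le_trans (lintegral_mono_set Ioc_subset_Ioc_union_Ioc) (lintegral_union_le _ _ _)

lemma kmeas (s : ℝ) : Measurable fun p : ℝ × ℝ => ENNReal.ofReal (|p.1 - p.2| ^ (-(1 + 2 * s))) := by
  refine ENNReal.measurable_ofReal.comp (Measurable.pow_const ?_ _)
  exact (continuous_abs.comp (continuous_fst.sub continuous_snd)).measurable

lemma offdiag (s : ℝ) (hs0 : 0 < s) (K : ℝ) (hK : ∀ h : ℝ, 0 < h → ∀ v : ℝ → ℝ, Measurable v →
    ∫⁻ x in Ioo 0 h, ENNReal.ofReal (v x ^ 2) * ENNReal.ofReal (x ^ (-(2 * s))) ≤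
      ENNReal.ofReal K * (ENNReal.ofReal (h ^ (-(2 * s))) * L2sq 0 h v + SlobSq s 0 h v))
    (a b : ℝ) (hab : a < b) (v : ℝ → ℝ) (hv : Measurable v) :
    ∫⁻ x in Ioo a b, ∫⁻ y in (Ioo a b)ᶜ,
      ENNReal.ofReal (v x ^ 2) * ENNReal.ofReal (|x - y| ^ (-(1 + 2 * s))) ≤
    ENNReal.ofReal (1 / (2 * s)) * (2 * (ENNReal.ofReal K *
      (ENNReal.ofReal ((b - a) ^ (-(2 * s))) * L2sq a b v + SlobSq s a b v))) := by
  have hw : Measurable fun x => ENNReal.ofReal (v x ^ 2) :=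
    ENNReal.measurable_ofReal.comp (hv.pow_const 2)
  have m1 : Measurable fun x : ℝ => ENNReal.ofReal (v x ^ 2) * ENNReal.ofReal ((x - a) ^ (-(2 * s))) :=
    hw.mul (ENNReal.measurable_ofReal.comp (Measurable.pow_const (by fun_prop) _))
  have m2 : Measurable fun x : ℝ => ENNReal.ofReal (v x ^ 2) * ENNReal.ofReal ((b - x) ^ (-(2 * s))) :=
    hw.mul (ENNReal.measurable_ofReal.comp (Measurable.pow_const (by fun_prop) _))
  calc _ ≤ ∫⁻ x in Ioo a b, ENNReal.ofReal (1 / (2 * s)) *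
        (ENNReal.ofReal (v x ^ 2) * ENNReal.ofReal ((x - a) ^ (-(2 * s))) +
         ENNReal.ofReal (v x ^ 2) * ENNReal.ofReal ((b - x) ^ (-(2 * s)))) := by
        apply setLIntegral_mono' measurableSet_Ioo
        intro x hx
        have hsub : (Ioo a b)ᶜ ⊆ Iic a ∪ Ici b := by
          intro y hy
          by_contra h
          simp only [mem_union, mem_Iic, mem_Ici, not_or, not_le] at h
          exact hy h
        have hle := le_trans (lintegral_mono_set (μ := volume)
          (f := fun y => ENNReal.ofReal (|x - y| ^ (-(1 + 2 * s)))) hsub) (lintegral_union_le _ _ _)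
        rw [kerL s hs0 a x hx.1, kerR s hs0 b x hx.2] at hle
        rw [lintegral_const_mul' _ _ ENNReal.ofReal_ne_top]
        refine le_trans (mul_le_mul_right hle _) (le_of_eq ?_)
        ring
    _ = ENNReal.ofReal (1 / (2 * s)) *
        ((∫⁻ x in Ioo a b, ENNReal.ofReal (v x ^ 2) * ENNReal.ofReal ((x - a) ^ (-(2 * s)))) +
         ∫⁻ x in Ioo a b, ENNReal.ofReal (v x ^ 2) * ENNReal.ofReal ((b - x) ^ (-(2 * s)))) := by
        rw [lintegral_const_mul' _ _ ENNReal.ofReal_ne_top, lintegral_add_right _ m2]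
    _ ≤ _ := by
        refine mul_le_mul_right ?_ _
        refine le_trans (add_le_add (hardyL s K hK a b hab v hv) (hardyR s K hK a b hab v hv)) (le_of_eq (two_mul _).symm)

lemma slob_bound (s : ℝ) (hs0 : 0 < s) (K : ℝ) (hK : ∀ h : ℝ, 0 < h → ∀ v : ℝ → ℝ, Measurable v →
    ∫⁻ x in Ioo 0 h, ENNReal.ofReal (v x ^ 2) * ENNReal.ofReal (x ^ (-(2 * s))) ≤
      ENNReal.ofReal K * (ENNReal.ofReal (h ^ (-(2 * s))) * L2sq 0 h v + SlobSq s 0 h v))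
    (N : ℕ) (x : ℕ → ℝ) (hx : ∀ i < N, x i < x (i + 1)) (v : ℝ → ℝ) (hv : Measurable v) :
    SlobSq s (x 0) (x N) v ≤ (∑ i ∈ Finset.range N, SlobSq s (x i) (x (i + 1)) v) +
      4 * ∑ i ∈ Finset.range N, ENNReal.ofReal (1 / (2 * s)) * (2 * (ENNReal.ofReal K *
      (ENNReal.ofReal ((x (i + 1) - x i) ^ (-(2 * s))) * L2sq (x i) (x (i + 1)) v
        + SlobSq s (x i) (x (i + 1)) v))) := by
  set I := Ioo (x 0) (x N) with hI
  let D : Set (ℝ × ℝ) := ⋃ i : Fin N, Ioo (x i) (x (i + 1)) ×ˢ Ioo (x i) (x (i + 1))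
  have hD : MeasurableSet D := MeasurableSet.iUnion fun i => measurableSet_Ioo.prod measurableSet_Ioo
  let J : Set (ℝ × ℝ) := (I ×ˢ I) \ D
  have hJ : MeasurableSet J := (measurableSet_Ioo.prod measurableSet_Ioo).diff hD
  have hJs : ∀ p : ℝ × ℝ, p.swap ∈ J ↔ p ∈ J := by
    rintro ⟨a, b⟩
    simp only [J, D, mem_sdiff, mem_prod, mem_iUnion, Prod.swap]
    simp only [and_comm]
  have hw : Measurable fun x => ENNReal.ofReal (v x ^ 2) :=
    ENNReal.measurable_ofReal.comp (hv.pow_const 2)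
  let H : ℝ × ℝ → ENNReal := J.indicator fun p =>
    ENNReal.ofReal (v p.1 ^ 2) * ENNReal.ofReal (|p.1 - p.2| ^ (-(1 + 2 * s)))
  have hH : Measurable H := ((hw.comp measurable_fst).mul (kmeas s)).indicator hJ
  have hHs : ∀ p ∈ J, H p.swap =
      ENNReal.ofReal (v p.2 ^ 2) * ENNReal.ofReal (|p.1 - p.2| ^ (-(1 + 2 * s))) := by
    intro p hp
    simp only [H]
    rw [indicator_of_mem ((hJs p).2 hp)]
    simp only [Prod.fst_swap, Prod.snd_swap]
    rw [abs_sub_comm]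
  -- integral of H
  have hA : ∫⁻ p, H p ≤ ∑ i ∈ Finset.range N, ENNReal.ofReal (1 / (2 * s)) * (2 * (ENNReal.ofReal K *
      (ENNReal.ofReal ((x (i + 1) - x i) ^ (-(2 * s))) * L2sq (x i) (x (i + 1)) v
        + SlobSq s (x i) (x (i + 1)) v))) := by
    rw [Measure.volume_eq_prod, lintegral_prod _ hH.aemeasurable]
    have e1 : ∫⁻ t, ∫⁻ y, H (t, y) ≤ ∫⁻ t in I, ∫⁻ y, H (t, y) := by
      rw [← lintegral_indicator measurableSet_Ioo]
      apply lintegral_mono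
      intro t
      by_cases ht : t ∈ I
      · rw [indicator_of_mem ht]
      · have : ∀ y, H (t, y) = 0 := by
          intro y
          apply indicator_of_notMem
          rintro ⟨h1, -⟩
          exact ht h1.1
        simp [this]
    refine e1.trans ((cover x _ N).trans (Finset.sum_le_sum ?_))
    intro i hi
    have hi' : i < N := Finset.mem_range.1 hi
    refine le_trans (setLIntegral_mono' measurableSet_Ioo ?_)
      (offdiag s hs0 K hK (x i) (x (i + 1)) (hx i hi') v hv)
    intro t ht
    rw [← lintegral_indicator measurableSet_Ioo.compl]
    apply lintegral_mono
    intro y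
    by_cases hy : (t, y) ∈ J
    · have : y ∈ (Ioo (x i) (x (i + 1)))ᶜ := by
        intro hy'
        exact hy.2 (mem_iUnion.2 ⟨⟨i, hi'⟩, ⟨ht, hy'⟩⟩)
      simp only [H, indicator_of_mem hy, indicator_of_mem this]; exact le_rfl
    · simp [H, indicator_of_notMem hy]
  have hB : ∫⁻ p : ℝ × ℝ, H p.swap = ∫⁻ p, H p := by
    rw [Measure.volume_eq_prod]
    exact lintegral_prod_swap (μ := (volume : Measure ℝ)) (ν := (volume : Measure ℝ)) H
  unfold SlobSq
  have hsub : I ×ˢ I ⊆ D ∪ J := by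
    intro p hp
    by_cases h : p ∈ D
    · exact Or.inl h
    · exact Or.inr ⟨hp, h⟩
  refine le_trans (lintegral_mono_set hsub) (le_trans (lintegral_union_le _ _ _) (add_le_add ?_ ?_))
  · refine le_trans (lintegral_iUnion_le _ _) ?_
    rw [tsum_fintype, Fin.sum_univ_eq_sum_range (fun i => ∫⁻ p in Ioo (x i) (x (i + 1)) ×ˢ Ioo (x i) (x (i + 1)),
      ENNReal.ofReal ((v p.1 - v p.2) ^ 2 / |p.1 - p.2| ^ (1 + 2 * s))) N]
  · calc _ ≤ ∫⁻ p in J, (2 * H p + 2 * H p.swap) := by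
          apply setLIntegral_mono' hJ
          intro p hp
          rw [hHs p hp]
          simp only [H, indicator_of_mem hp]
          rw [← mul_add, ← add_mul, ← ENNReal.ofReal_add (by positivity) (by positivity),
            ← ENNReal.ofReal_mul (by positivity), ← ENNReal.ofReal_ofNat,
            ← ENNReal.ofReal_mul (by norm_num)]
          apply ENNReal.ofReal_le_ofReal
          rw [Real.rpow_neg (abs_nonneg _), div_eq_mul_inv, ← mul_assoc]
          refine mul_le_mul_of_nonneg_right ?_ (by positivity)
          nlinarith [sq_nonneg (v p.1 + v p.2)]
      _ ≤ ∫⁻ p : ℝ × ℝ, (2 * H p + 2 * H p.swap) := setLIntegral_le_lintegral _ _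
      _ = 4 * ∫⁻ p, H p := by
          rw [lintegral_add_left (hH.const_mul _), lintegral_const_mul _ hH,
            lintegral_const_mul' _ _ (by norm_num), hB, ← add_mul]
          norm_num
      _ ≤ _ := mul_le_mul_right hA _

/-- for `s ∈ (0,1/2)` and a quasi-uniform partition of `(0,1)` into `N`
intervals, `‖v‖²_{H^s(0,1)} ≤ C² N^{2s} ∑_T ‖v‖²_{H^s(T)}`, with `C` depending only
on `s` and the quasi-uniformity constant. -/
theorem broken_norm_bound (s : ℝ) (hs0 : 0 < s) (hs2 : s < 1 / 2)
    (cq : ℝ) (hcq : 1 ≤ cq) :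
    ∃ C : ℝ, 0 < C ∧
      ∀ (N : ℕ), 0 < N → ∀ x : ℕ → ℝ, x 0 = 0 → x N = 1 →
      (∀ i < N, 1 / (cq * N) ≤ x (i + 1) - x i ∧ x (i + 1) - x i ≤ cq / N) →
      ∀ v : ℝ → ℝ, Measurable v →
      HsSq s 0 1 v
        ≤ ENNReal.ofReal (C ^ 2 * (N : ℝ) ^ (2 * s)) *
            ∑ i ∈ Finset.range N, HsSq s (x i) (x (i + 1)) v := by
  obtain ⟨K, hK0, hK⟩ := hardy0 s hs0 hs2
  have hM : 0 < 4 * K / s := by positivity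
  have hcq0 : 0 < cq := by linarith
  have hC2 : 0 < (1 + 4 * K / s) * cq ^ (2 * s) := by
    have := Real.rpow_pos_of_pos hcq0 (2 * s)
    positivity
  refine ⟨Real.sqrt ((1 + 4 * K / s) * cq ^ (2 * s)), Real.sqrt_pos.2 hC2, ?_⟩
  intro N hN x hx0 hxN hx v hv
  rw [Real.sq_sqrt hC2.le]
  have hN0 : (0 : ℝ) < N := by exact_mod_cast hN
  have hN1 : (1 : ℝ) ≤ N := by exact_mod_cast hN
  have hlow : 0 < 1 / (cq * N) := by positivity
  have hmono : ∀ i < N, x i < x (i + 1) := fun i hi => by linarith [(hx i hi).1]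
  have hL : L2sq 0 1 v ≤ ∑ i ∈ Finset.range N, L2sq (x i) (x (i + 1)) v := by
    have := cover x (fun t => ENNReal.ofReal (v t ^ 2)) N
    rwa [hx0, hxN] at this
  have hS := slob_bound s hs0 K hK N x hmono v hv
  rw [hx0, hxN] at hS
  refine le_trans (add_le_add hL hS) ?_
  rw [Finset.mul_sum, Finset.mul_sum, ← Finset.sum_add_distrib, ← Finset.sum_add_distrib]
  apply Finset.sum_le_sum
  intro i hi
  have hi' := Finset.mem_range.1 hi
  unfold HsSq
  set L := L2sq (x i) (x (i + 1)) v
  set S := SlobSq s (x i) (x (i + 1)) v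
  have hh := (hx i hi').1
  set h := x (i + 1) - x i
  have hh0 : 0 < h := by linarith
  have hP : cq ^ (2 * s) * (N : ℝ) ^ (2 * s) = (cq * N) ^ (2 * s) := by
    rw [Real.mul_rpow hcq0.le hN0.le]
  have hP1 : 1 ≤ (cq * N) ^ (2 * s) := Real.one_le_rpow (by nlinarith) (by linarith)
  have hPh : h ^ (-(2 * s)) ≤ (cq * N) ^ (2 * s) := by
    rw [Real.rpow_neg hh0.le, ← Real.inv_rpow hh0.le]
    refine Real.rpow_le_rpow (by positivity) ?_ (by linarith)
    rw [inv_le_comm₀ hh0 (by positivity)]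
    simpa using hh
  rw [mul_assoc, hP]
  set P := (cq * (N : ℝ)) ^ (2 * s)
  have e : 4 * (ENNReal.ofReal (1 / (2 * s)) * (2 * (ENNReal.ofReal K *
      (ENNReal.ofReal (h ^ (-(2 * s))) * L + S)))) =
      ENNReal.ofReal (4 * K / s) * (ENNReal.ofReal (h ^ (-(2 * s))) * L + S) := by
    rw [show 4 * K / s = 4 * (1 / (2 * s)) * 2 * K by field_simp,
      ENNReal.ofReal_mul (by positivity), ENNReal.ofReal_mul (by positivity),
      ENNReal.ofReal_mul (by positivity), ENNReal.ofReal_ofNat, ENNReal.ofReal_ofNat]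
    ring
  rw [e]
  have hhp : 0 < h ^ (-(2 * s)) := Real.rpow_pos_of_pos hh0 _
  have c1 : 1 + ENNReal.ofReal (4 * K / s) * ENNReal.ofReal (h ^ (-(2 * s))) ≤
      ENNReal.ofReal ((1 + 4 * K / s) * P) := by
    rw [← ENNReal.ofReal_mul hM.le, ← ENNReal.ofReal_one, ← ENNReal.ofReal_add (by norm_num) (by positivity)]
    apply ENNReal.ofReal_le_ofReal
    nlinarith
  have c2 : 1 + ENNReal.ofReal (4 * K / s) ≤ ENNReal.ofReal ((1 + 4 * K / s) * P) := by
    rw [← ENNReal.ofReal_one, ← ENNReal.ofReal_add (by norm_num) (by positivity)]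
    apply ENNReal.ofReal_le_ofReal
    nlinarith
  calc _ = (1 + ENNReal.ofReal (4 * K / s) * ENNReal.ofReal (h ^ (-(2 * s)))) * L
        + (1 + ENNReal.ofReal (4 * K / s)) * S := by ring
    _ ≤ _ := by
      rw [mul_add]
      exact add_le_add (mul_le_mul_left c1 _) (mul_le_mul_left c2 _)
end

section
/- Let s ∈ (1/2, 1) and 𝒯 a quasi-uniform partition of I=(0,1) into N intervals of length ≃ 1/N. Then for all piecewise H^s functions v on 𝒯, the piecewise distributional derivative satisfies ‖D_𝒯 v‖_{H̃^{s-1}(I)} ≤ C N^{1-s} (∑_{T∈𝒯} |v|²_{H^s(T)})^{1/2}, where H̃^{s-1}(I) is the dual of H^{1-s}(I) and |·|_{H^s(T)} the Sobolev–Slobodeckij seminorm, with C depending only on s and the quasi-uniformity constant. -/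
open MeasureTheory Set

/-- `H^σ(0,1)` norm (Sobolev–Slobodeckij). -/
noncomputable def HsNorm (σ : ℝ) (f : ℝ → ℝ) : ℝ :=
  Real.sqrt ((L2sq 0 1 f + SlobSq σ 0 1 f).toReal)

noncomputable def GG (θ : ℝ) (f : ℝ → ℝ) (p : ℝ × ℝ) : ℝ := (f p.1 - f p.2) ^ 2 / |p.1 - p.2| ^ θ

lemma GG_nonneg (θ : ℝ) (f : ℝ → ℝ) (p : ℝ × ℝ) : 0 ≤ GG θ f p := by
  unfold GG; positivity

lemma GG_zero (f : ℝ → ℝ) (p : ℝ × ℝ) : GG 0 f p = (f p.1 - f p.2) ^ 2 := by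
  simp [GG]

lemma GG_le {θ θ' h : ℝ} (hθ : θ' ≤ θ) (f : ℝ → ℝ) (p : ℝ × ℝ) (hp : |p.1 - p.2| ≤ h) :
    GG θ' f p ≤ h ^ (θ - θ') * GG θ f p := by
  unfold GG
  by_cases h0 : p.1 = p.2
  · simp [h0]
  have hpos : 0 < |p.1 - p.2| := abs_pos.2 (sub_ne_zero.2 h0)
  have h1 : |p.1 - p.2| ^ (θ - θ') ≤ h ^ (θ - θ') :=
    Real.rpow_le_rpow hpos.le hp (by linarith)
  have h2 : |p.1 - p.2| ^ θ = |p.1 - p.2| ^ (θ - θ') * |p.1 - p.2| ^ θ' := by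
    rw [← Real.rpow_add hpos]; ring_nf
  rw [h2]
  have h3 : 0 < |p.1 - p.2| ^ θ' := Real.rpow_pos_of_pos hpos _
  have h4 : 0 < |p.1 - p.2| ^ (θ - θ') := Real.rpow_pos_of_pos hpos _
  rw [← mul_div_assoc, div_le_div_iff₀ h3 (by positivity)]
  have := sq_nonneg (f p.1 - f p.2)
  calc _ = |p.1 - p.2| ^ (θ - θ') * ((f p.1 - f p.2) ^ 2 * |p.1 - p.2| ^ θ') := by ring
    _ ≤ h ^ (θ - θ') * ((f p.1 - f p.2) ^ 2 * |p.1 - p.2| ^ θ') := by gcongr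
    _ = _ := by ring

lemma GG_meas (θ : ℝ) {f : ℝ → ℝ} {a b : ℝ} (hf : ContinuousOn f (Icc a b)) :
    AEStronglyMeasurable (GG θ f) (volume.restrict (Ioc a b ×ˢ Ioc a b)) := by
  have hm : MeasurableSet (Ioc a b ×ˢ Ioc a b) := measurableSet_Ioc.prod measurableSet_Ioc
  have h1 : ContinuousOn (fun p : ℝ × ℝ => (f p.1 - f p.2) ^ 2) (Ioc a b ×ˢ Ioc a b) := by
    refine ((hf.comp continuousOn_fst ?_).sub (hf.comp continuousOn_snd ?_)).pow 2
    · rintro p ⟨h, _⟩; exact Ioc_subset_Icc_self h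
    · rintro p ⟨_, h⟩; exact Ioc_subset_Icc_self h
  have h2 : Measurable (fun p : ℝ × ℝ => |p.1 - p.2| ^ θ) := by fun_prop
  exact ((h1.aestronglyMeasurable hm).aemeasurable.div h2.aemeasurable).aestronglyMeasurable

noncomputable def QQ (θ : ℝ) (f : ℝ → ℝ) (a b c d : ℝ) : ℝ :=
  ∫ p in Ioc a b ×ˢ Ioc c d, GG θ f p

lemma QQ_nonneg (θ : ℝ) (f : ℝ → ℝ) (a b c d : ℝ) : 0 ≤ QQ θ f a b c d :=
  integral_nonneg (GG_nonneg θ f)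

lemma slob_eq (s a b : ℝ) (f : ℝ → ℝ) :
    SlobSq s a b f = ∫⁻ p in Ioc a b ×ˢ Ioc a b, ENNReal.ofReal (GG (1 + 2 * s) f p) := by
  unfold SlobSq GG
  rw [Measure.volume_eq_prod, ← Measure.prod_restrict, ← Measure.prod_restrict,
    Measure.restrict_congr_set (Ioo_ae_eq_Ioc (a := a) (b := b) (μ := (volume : Measure ℝ)))]

lemma slob_int {s a b : ℝ} {f : ℝ → ℝ} (hf : ContinuousOn f (Icc a b)) (h : SlobSq s a b f < ⊤) :
    IntegrableOn (GG (1 + 2 * s) f) (Ioc a b ×ˢ Ioc a b) := by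
  refine ⟨GG_meas _ hf, ?_⟩
  rw [hasFiniteIntegral_iff_ofReal (Filter.Eventually.of_forall (GG_nonneg _ f)), ← slob_eq]
  exact h

lemma slob_toReal {s a b : ℝ} {f : ℝ → ℝ} (hf : ContinuousOn f (Icc a b)) :
    (SlobSq s a b f).toReal = QQ (1 + 2 * s) f a b a b := by
  rw [slob_eq, QQ, integral_eq_lintegral_of_nonneg_ae
    (Filter.Eventually.of_forall (GG_nonneg _ f)) (GG_meas _ hf)]

lemma abs_sub_le_of_mem {a b : ℝ} {p : ℝ × ℝ} (hp : p ∈ Ioc a b ×ˢ Ioc a b) :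
    |p.1 - p.2| ≤ b - a := by
  obtain ⟨⟨h1, h2⟩, h3, h4⟩ := hp
  rw [abs_le]; constructor <;> linarith

/-- integrability passes to lower exponents -/
lemma GG_int_lower {θ θ' a b : ℝ} (hθ : θ' ≤ θ) {f : ℝ → ℝ} (hf : ContinuousOn f (Icc a b))
    (h : IntegrableOn (GG θ f) (Ioc a b ×ˢ Ioc a b)) :
    IntegrableOn (GG θ' f) (Ioc a b ×ˢ Ioc a b) := by
  refine Integrable.mono' (h.const_mul ((b - a) ^ (θ - θ'))) (GG_meas _ hf) ?_
  refine (ae_restrict_iff' (measurableSet_Ioc.prod measurableSet_Ioc)).2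
    (Filter.Eventually.of_forall fun p hp => ?_)
  rw [Real.norm_of_nonneg (GG_nonneg _ _ _)]
  exact GG_le hθ f p (abs_sub_le_of_mem hp)

lemma QQ_mono {θ a b c d a' b' c' d' : ℝ} {f : ℝ → ℝ} 
    (h : IntegrableOn (GG θ f) (Ioc a' b' ×ˢ Ioc c' d'))
    (h1 : a' ≤ a) (h2 : b ≤ b') (h3 : c' ≤ c) (h4 : d ≤ d') :
    QQ θ f a b c d ≤ QQ θ f a' b' c' d' := by
  refine setIntegral_mono_set h (Filter.Eventually.of_forall (GG_nonneg _ f)) ?_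
  exact (prod_mono (Ioc_subset_Ioc h1 h2) (Ioc_subset_Ioc h3 h4)).eventuallyLE

lemma QQ_lower {θ θ' a b c d l r : ℝ} (hθ : θ' ≤ θ) {f : ℝ → ℝ} (hf : ContinuousOn f (Icc l r))
    (h : IntegrableOn (GG θ f) (Ioc l r ×ˢ Ioc l r))
    (h1 : l ≤ a) (h2 : b ≤ r) (h3 : l ≤ c) (h4 : d ≤ r) :
    QQ θ' f a b c d ≤ (r - l) ^ (θ - θ') * QQ θ f a b c d := by
  unfold QQ
  rw [← integral_const_mul]
  have hs : Ioc a b ×ˢ Ioc c d ⊆ Ioc l r ×ˢ Ioc l r :=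
    (prod_mono (Ioc_subset_Ioc h1 h2) (Ioc_subset_Ioc h3 h4))
  refine setIntegral_mono_on ((GG_int_lower hθ hf h).mono_set hs) ((h.mono_set hs).const_mul _)
    (measurableSet_Ioc.prod measurableSet_Ioc) fun p hp => ?_
  exact GG_le hθ f p (abs_sub_le_of_mem (hs hp))

lemma QQ_split {θ a m b : ℝ} (h1 : a ≤ m) (h2 : m ≤ b) {f : ℝ → ℝ}
    (h : IntegrableOn (GG θ f) (Ioc a b ×ˢ Ioc a b)) :
    QQ θ f a b a b = QQ θ f a m a m + QQ θ f m b m b + (QQ θ f a m m b + QQ θ f m b a m) := by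
  have hu : Ioc a b = Ioc a m ∪ Ioc m b := (Ioc_union_Ioc_eq_Ioc h1 h2).symm
  have hd : Disjoint (Ioc a m) (Ioc m b) := Ioc_disjoint_Ioc_of_le le_rfl
  have key : ∀ c d, a ≤ c → d ≤ b → QQ θ f a b c d = QQ θ f a m c d + QQ θ f m b c d := by
    intro c d hc hd'
    unfold QQ
    rw [hu, union_prod, setIntegral_union (by rw [disjoint_prod]; exact Or.inl hd)
      (measurableSet_Ioc.prod measurableSet_Ioc)]
    · exact h.mono_set (prod_mono (Ioc_subset_Ioc le_rfl h2) (Ioc_subset_Ioc hc hd'))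
    · exact h.mono_set (prod_mono (Ioc_subset_Ioc h1 le_rfl) (Ioc_subset_Ioc hc hd'))
  have key2 : QQ θ f a b a b = QQ θ f a b a m + QQ θ f a b m b := by
    conv_lhs => unfold QQ
    have : Ioc a b ×ˢ Ioc a b = Ioc a b ×ˢ Ioc a m ∪ Ioc a b ×ˢ Ioc m b := by
      rw [← prod_union, ← hu]
    rw [this, setIntegral_union (by rw [disjoint_prod]; exact Or.inr hd)
      (measurableSet_Ioc.prod measurableSet_Ioc)]
    · rfl
    · exact h.mono_set (prod_mono le_rfl (Ioc_subset_Ioc le_rfl h2))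
    · exact h.mono_set (prod_mono le_rfl (Ioc_subset_Ioc h1 le_rfl))
  rw [key2, key a m le_rfl h2, key m b h1 le_rfl]; ring

noncomputable def av (f : ℝ → ℝ) (a b : ℝ) : ℝ := (∫ t in a..b, f t) / (b - a)

lemma av_sub_sq {f : ℝ → ℝ} {l r a b c d : ℝ} (hf : ContinuousOn f (Icc l r))
    (h1 : l ≤ a) (h2 : b ≤ r) (h3 : l ≤ c) (h4 : d ≤ r) (hab : a < b) (hcd : c < d) :
    (av f a b - av f c d) ^ 2 * ((b - a) * (d - c)) ≤ QQ 0 f a b c d := by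
  set U := Ioc a b ×ˢ Ioc c d with hU
  have hUs : U ⊆ Icc l r ×ˢ Icc l r := prod_mono
    ((Ioc_subset_Ioc h1 h2).trans Ioc_subset_Icc_self)
    ((Ioc_subset_Ioc h3 h4).trans Ioc_subset_Icc_self)
  have c1 : ContinuousOn (fun p : ℝ × ℝ => f p.1) (Icc l r ×ˢ Icc l r) :=
    hf.comp continuousOn_fst fun p hp => hp.1
  have c2 : ContinuousOn (fun p : ℝ × ℝ => f p.2) (Icc l r ×ˢ Icc l r) :=
    hf.comp continuousOn_snd fun p hp => hp.2
  have hK : IsCompact (Icc l r ×ˢ Icc l r) := isCompact_Icc.prod isCompact_Icc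
  have i1 : IntegrableOn (fun p : ℝ × ℝ => f p.1) U := (c1.integrableOn_compact hK).mono_set hUs
  have i2 : IntegrableOn (fun p : ℝ × ℝ => f p.2) U := (c2.integrableOn_compact hK).mono_set hUs
  have i3 : IntegrableOn (fun p : ℝ × ℝ => (f p.1 - f p.2) ^ 2) U :=
    (((c1.sub c2).pow 2).integrableOn_compact hK).mono_set hUs
  have e1 : ∫ p in U, f p.1 = (∫ t in a..b, f t) * (d - c) := by
    have := setIntegral_prod_mul (μ := (volume : Measure ℝ)) (ν := (volume : Measure ℝ))
      f (fun _ => (1 : ℝ)) (Ioc a b) (Ioc c d)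
    rw [← Measure.volume_eq_prod] at this
    simp only [mul_one] at this
    rw [hU, this, intervalIntegral.integral_of_le hab.le]
    simp [hcd.le]
  have e2 : ∫ p in U, f p.2 = (b - a) * (∫ t in c..d, f t) := by
    have := setIntegral_prod_mul (μ := (volume : Measure ℝ)) (ν := (volume : Measure ℝ))
      (fun _ => (1 : ℝ)) f (Ioc a b) (Ioc c d)
    rw [← Measure.volume_eq_prod] at this
    simp only [one_mul] at this
    rw [hU, this, intervalIntegral.integral_of_le hcd.le]
    simp [hab.le]
  set D := av f a b - av f c d with hD
  have hvol : ∫ p in U, (1 : ℝ) = (b - a) * (d - c) := by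
    have := setIntegral_prod_mul (μ := (volume : Measure ℝ)) (ν := (volume : Measure ℝ))
      (fun _ => (1 : ℝ)) (fun _ => (1 : ℝ)) (Ioc a b) (Ioc c d)
    rw [← Measure.volume_eq_prod] at this
    simp only [one_mul] at this
    rw [hU, this]
    simp [hab.le, hcd.le]
  have i0 : IntegrableOn (fun _ : ℝ × ℝ => (1 : ℝ)) U :=
    (continuousOn_const.integrableOn_compact hK).mono_set hUs
  have e3 : (∫ p in U, f p.1) - ∫ p in U, f p.2 = D * ((b - a) * (d - c)) := by
    rw [e1, e2, hD, av, av]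
    have : b - a ≠ 0 := by linarith
    have : d - c ≠ 0 := by linarith
    field_simp
  have e4 : ∫ p in U, (f p.1 - f p.2 - D) ^ 2
      = QQ 0 f a b c d - 2 * D * (D * ((b - a) * (d - c))) + D ^ 2 * ((b - a) * (d - c)) := by
    have : ∀ p : ℝ × ℝ, (f p.1 - f p.2 - D) ^ 2
        = (f p.1 - f p.2) ^ 2 - 2 * D * (f p.1 - f p.2) + D ^ 2 * 1 := fun p => by ring
    simp_rw [this]
    have i12 : IntegrableOn (fun p : ℝ × ℝ => 2 * D * (f p.1 - f p.2)) U :=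
      (i1.sub i2).const_mul _
    have i4 : IntegrableOn (fun p : ℝ × ℝ => (f p.1 - f p.2) ^ 2 - 2 * D * (f p.1 - f p.2)) U :=
      i3.sub i12
    rw [integral_add i4 (i0.const_mul _),
      integral_sub i3 i12, integral_const_mul, integral_const_mul,
      integral_sub i1 i2, hvol, e3]
    simp only [QQ, GG_zero]
    rfl
  have e5 : 0 ≤ ∫ p in U, (f p.1 - f p.2 - D) ^ 2 := integral_nonneg fun p => sq_nonneg _
  nlinarith

lemma av_sq {f : ℝ → ℝ} (hf : Continuous f) {a b : ℝ} (hab : a < b) :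
    (av f a b) ^ 2 * (b - a) ≤ ∫ t in a..b, f t ^ 2 := by
  set D := av f a b with hD
  have hI : ∫ t in a..b, f t = D * (b - a) := by
    rw [hD, av]; have : b - a ≠ 0 := by linarith
    field_simp
  have e4 : ∫ t in a..b, (f t - D) ^ 2 = (∫ t in a..b, f t ^ 2) - 2 * D * (D * (b - a))
      + D ^ 2 * (b - a) := by
    have : ∀ t, (f t - D) ^ 2 = f t ^ 2 - 2 * D * f t + D ^ 2 := fun p => by ring
    simp_rw [this]
    rw [intervalIntegral.integral_add, intervalIntegral.integral_sub,
      intervalIntegral.integral_const_mul, hI]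
    · simp; ring
    all_goals apply Continuous.intervalIntegrable; fun_prop
  have e5 : 0 ≤ ∫ t in a..b, (f t - D) ^ 2 :=
    intervalIntegral.integral_nonneg hab.le fun p _ => sq_nonneg _
  nlinarith

lemma av_close {f : ℝ → ℝ} {a b c ε : ℝ} (hab : a < b) (hf : IntervalIntegrable f volume a b)
    (h : ∀ t ∈ Icc a b, |f t - c| ≤ ε) : |av f a b - c| ≤ ε := by
  have hb : 0 < b - a := by linarith
  have : av f a b - c = (∫ t in a..b, (f t - c)) / (b - a) := by
    rw [intervalIntegral.integral_sub hf intervalIntegrable_const, av]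
    simp; field_simp
  rw [this, abs_div, abs_of_pos hb, div_le_iff₀ hb]
  have := intervalIntegral.norm_integral_le_of_norm_le_const (f := fun t => f t - c) (C := ε)
    (a := a) (b := b) fun t ht => by
      rw [uIoc_of_le hab.le] at ht; exact h t (Ioc_subset_Icc_self ht)
  rwa [abs_of_pos hb] at this

lemma point_av {δ : ℝ} (hδ : 0 < δ) {f : ℝ → ℝ} {a b : ℝ} (hab : a < b)
    (hf : ContinuousOn f (Icc a b))
    (hi : IntegrableOn (GG (2 + δ) f) (Ioc a b ×ˢ Ioc a b)) (p : ℝ) (l r : ℕ → ℝ)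
    (hl : ∀ n, a ≤ l n) (hr : ∀ n, r n ≤ b) (hlr : ∀ n, r n - l n = (b - a) / 2 ^ n)
    (hl' : ∀ n, l n ≤ l (n + 1)) (hr' : ∀ n, r (n + 1) ≤ r n)
    (hp : ∀ n, p ∈ Icc (l n) (r n)) :
    |av f (l 0) (r 0) - f p| ≤ Real.sqrt (2 * (b - a) ^ δ * QQ (2 + δ) f a b a b) /
      (1 - (1 / 2 : ℝ) ^ (δ / 2)) := by
  have hba : 0 < b - a := by linarith
  have hq1 : (1 / 2 : ℝ) ^ (δ / 2) < 1 :=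
    Real.rpow_lt_one (by norm_num) (by norm_num) (by linarith)
  have hpos : ∀ n, 0 < r n - l n := fun n => by rw [hlr]; positivity
  have hpab : p ∈ Icc a b := ⟨(hl 0).trans (hp 0).1, (hp 0).2.trans (hr 0)⟩
  have hQ := QQ_nonneg (2 + δ) f a b a b
  have hd : ∀ n, dist (av f (l n) (r n)) (av f (l (n+1)) (r (n+1))) ≤
      Real.sqrt (2 * (b - a) ^ δ * QQ (2 + δ) f a b a b) * ((1 / 2 : ℝ) ^ (δ / 2)) ^ n := by
    intro n
    rw [Real.dist_eq]
    apply abs_le_of_sq_le_sq _ (by positivity)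
    have hf' : ContinuousOn f (Icc (l n) (r n)) := hf.mono (Icc_subset_Icc (hl n) (hr n))
    have hi' : IntegrableOn (GG (2 + δ) f) (Ioc (l n) (r n) ×ˢ Ioc (l n) (r n)) :=
      hi.mono_set (prod_mono (Ioc_subset_Ioc (hl n) (hr n)) (Ioc_subset_Ioc (hl n) (hr n)))
    have h1 := av_sub_sq hf' le_rfl le_rfl (hl' n) (hr' n) (by linarith [hpos n])
      (by linarith [hpos (n+1)])
    have h2 := QQ_lower (θ' := 0) (by linarith) hf' hi' le_rfl le_rfl (hl' n) (hr' n)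
    have h3 := QQ_mono hi (hl n) (hr n) ((hl n).trans (hl' n)) ((hr' n).trans (hr n))
    have h4 : r (n+1) - l (n+1) = (r n - l n) / 2 := by
      rw [hlr, hlr, pow_succ]; field_simp
    rw [h4] at h1
    rw [mul_pow, Real.sq_sqrt (by positivity)]
    have h5 : (r n - l n) ^ δ = (b - a) ^ δ * (((1 / 2 : ℝ) ^ (δ / 2)) ^ n) ^ 2 := by
      rw [hlr, div_eq_mul_inv, Real.mul_rpow hba.le (by positivity)]
      congr 1
      rw [← inv_pow, ← Real.rpow_natCast, ← Real.rpow_natCast, ← Real.rpow_natCast,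
        ← Real.rpow_mul (by norm_num), ← Real.rpow_mul (by positivity),
        ← Real.rpow_mul (by positivity)]
      norm_num
      congr 1
      ring
    have h6 : (r n - l n) ^ (2 + δ - 0) = (r n - l n) ^ 2 * (r n - l n) ^ δ := by
      rw [sub_zero, Real.rpow_add (hpos n)]; norm_num
    rw [h6] at h2
    have h7 : 0 < (r n - l n) ^ 2 := by have := hpos n; positivity
    have h8 : (av f (l n) (r n) - av f (l (n + 1)) (r (n + 1))) ^ 2 * (r n - l n) ^ 2 ≤
        (2 * (r n - l n) ^ δ * QQ (2 + δ) f a b a b) * (r n - l n) ^ 2 := by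
      have h9 : 0 ≤ (r n - l n) ^ δ := Real.rpow_nonneg (hpos n).le _
      calc _ = 2 * ((av f (l n) (r n) - av f (l (n + 1)) (r (n + 1))) ^ 2
              * ((r n - l n) * ((r n - l n) / 2))) := by ring
        _ ≤ 2 * ((r n - l n) ^ 2 * (r n - l n) ^ δ * QQ (2 + δ) f a b a b) := by
            refine mul_le_mul_of_nonneg_left (h1.trans (h2.trans ?_)) (by norm_num)
            exact mul_le_mul_of_nonneg_left h3 (by positivity)
        _ = _ := by ring
    have := le_of_mul_le_mul_right h8 h7
    rw [h5] at this
    linarith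
  have ht : Filter.Tendsto (fun n => av f (l n) (r n)) Filter.atTop (nhds (f p)) := by
    rw [Metric.tendsto_atTop]
    intro ε hε
    obtain ⟨η, hη, H⟩ := Metric.continuousOn_iff.1 hf p hpab (ε / 2) (by linarith)
    have hlim : Filter.Tendsto (fun n : ℕ => (b - a) * (1 / 2 : ℝ) ^ n) Filter.atTop (nhds 0) := by
      simpa using (tendsto_pow_atTop_nhds_zero_of_lt_one (r := (1 / 2 : ℝ)) (by norm_num)
        (by norm_num)).const_mul (b - a)
    obtain ⟨n0, hn0⟩ := Filter.eventually_atTop.1 (hlim.eventually (gt_mem_nhds hη))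
    refine ⟨n0, fun n hn => ?_⟩
    have hh := hn0 n hn
    rw [Real.dist_eq]
    refine lt_of_le_of_lt (b := ε / 2) ?_ (by linarith)
    refine av_close (by linarith [hpos n]) ?_ ?_
    · apply ContinuousOn.intervalIntegrable_of_Icc (by linarith [hpos n])
      exact hf.mono (Icc_subset_Icc (hl n) (hr n))
    · intro t ht
      have := H t ⟨(hl n).trans ht.1, ht.2.trans (hr n)⟩ ?_
      · rw [Real.dist_eq] at this; exact this.le
      · rw [Real.dist_eq, abs_lt]
        have h1 := hlr n
        have h2 := (hp n).1
        have h3 := (hp n).2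
        have h4 : (b - a) / 2 ^ n = (b - a) * (1 / 2 : ℝ) ^ n := by
          rw [one_div, inv_pow]; rfl
        constructor <;> linarith [ht.1, ht.2]
  have := dist_le_of_le_geometric_of_tendsto₀ _ _ hq1 hd ht
  rwa [Real.dist_eq] at this

noncomputable def C0 (δ : ℝ) : ℝ := 8 / (1 - (1 / 2 : ℝ) ^ (δ / 2)) ^ 2

lemma C0_pos {δ : ℝ} (hδ : 0 < δ) : 0 < C0 δ := by
  have hq1 : (1 / 2 : ℝ) ^ (δ / 2) < 1 :=
    Real.rpow_lt_one (by norm_num) (by norm_num) (by linarith)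
  have : 0 < 1 - (1 / 2 : ℝ) ^ (δ / 2) := by linarith
  unfold C0; positivity

lemma two_pt {δ : ℝ} (hδ : 0 < δ) {f : ℝ → ℝ} {a b : ℝ} (hab : a < b)
    (hf : ContinuousOn f (Icc a b))
    (hi : IntegrableOn (GG (2 + δ) f) (Ioc a b ×ˢ Ioc a b)) :
    (f b - f a) ^ 2 ≤ C0 δ * ((b - a) ^ δ * QQ (2 + δ) f a b a b) := by
  have hba : 0 < b - a := by linarith
  have hq1 : (1 / 2 : ℝ) ^ (δ / 2) < 1 :=
    Real.rpow_lt_one (by norm_num) (by norm_num) (by linarith)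
  have hQ := QQ_nonneg (2 + δ) f a b a b
  have hle : ∀ n : ℕ, (b - a) / 2 ^ n ≤ b - a := fun n =>
    div_le_self hba.le (one_le_pow₀ (by norm_num))
  have hpos : ∀ n : ℕ, 0 < (b - a) / 2 ^ n := fun n => by positivity
  have hdec : ∀ n : ℕ, (b - a) / 2 ^ (n + 1) ≤ (b - a) / 2 ^ n := fun n => by
    have : (b - a) / 2 ^ (n + 1) = (b - a) / 2 ^ n / 2 := by rw [pow_succ]; field_simp
    linarith [hpos n]
  have h1 := point_av hδ hab hf hi b (fun n => b - (b - a) / 2 ^ n) (fun _ => b)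
    (fun n => by linarith [hle n]) (fun n => le_rfl) (fun n => by ring)
    (fun n => by linarith [hdec n]) (fun n => le_rfl)
    (fun n => ⟨by linarith [hpos n], le_rfl⟩)
  have h2 := point_av hδ hab hf hi a (fun _ => a) (fun n => a + (b - a) / 2 ^ n)
    (fun n => le_rfl) (fun n => by linarith [hle n]) (fun n => by ring)
    (fun n => le_rfl) (fun n => by linarith [hdec n])
    (fun n => ⟨le_rfl, by linarith [hpos n]⟩)
  simp only [pow_zero, div_one, sub_sub_cancel, add_sub_cancel] at h1 h2
  set X := Real.sqrt (2 * (b - a) ^ δ * QQ (2 + δ) f a b a b) / (1 - (1 / 2 : ℝ) ^ (δ / 2)) with hX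
  have h3 : |f b - f a| ≤ 2 * X := by
    rw [abs_le] at *
    constructor <;> linarith [h1.1, h1.2, h2.1, h2.2]
  have h4 : (f b - f a) ^ 2 ≤ (2 * X) ^ 2 := by
    rw [← sq_abs]; exact pow_le_pow_left₀ (abs_nonneg _) h3 2
  refine h4.trans (le_of_eq ?_)
  rw [hX, mul_pow, div_pow, Real.sq_sqrt (by positivity), C0]
  ring

noncomputable def BB (v w : ℝ → ℝ) (a b : ℝ) : ℝ :=
  v b * w b - v a * w a - ∫ t in a..b, v t * deriv w t

noncomputable def RR (v w : ℝ → ℝ) (a b : ℝ) : ℝ := BB v w a b - av w a b * (v b - v a)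

lemma sq_le_amgm {d l x y : ℝ} (hl : 0 < l) (hx : 0 ≤ x) (hy : 0 ≤ y) (h : d ^ 2 ≤ 4 * (x * y)) :
    |d| ≤ l * x + l⁻¹ * y := by
  apply abs_le_of_sq_le_sq _ (by positivity)
  have h1 : l * l⁻¹ = 1 := mul_inv_cancel₀ hl.ne'
  have h2 := sq_nonneg (l * x - l⁻¹ * y)
  have h3 : (l * x + l⁻¹ * y) ^ 2 = (l * x - l⁻¹ * y) ^ 2 + 4 * (l * l⁻¹) * (x * y) := by ring
  rw [h3, h1]; linarith

lemma vd_int {v w : ℝ → ℝ} (hw : ContDiff ℝ 1 w) {a b l r : ℝ} (hv : ContinuousOn v (Icc l r))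
    (hl : l ≤ a) (hab : a ≤ b) (hr : b ≤ r) :
    IntervalIntegrable (fun t => v t * deriv w t) volume a b := by
  apply ContinuousOn.intervalIntegrable_of_Icc hab
  exact (hv.mono (Icc_subset_Icc hl hr)).mul (hw.continuous_deriv le_rfl).continuousOn

lemma RR_split {v w : ℝ → ℝ} (hw : ContDiff ℝ 1 w) {a m b : ℝ} (hv : ContinuousOn v (Icc a b))
    (h1 : a < m) (hm : m - a = (b - a) / 2) :
    RR v w a b = RR v w a m + RR v w m b
      + (av w a m - av w m b) / 2 * ((v m - v a) - (v b - v m)) := by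
  have h2 : m < b := by linarith
  have e1 := intervalIntegral.integral_add_adjacent_intervals
    (vd_int hw hv le_rfl h1.le h2.le) (vd_int hw hv h1.le h2.le le_rfl)
  have e2 := intervalIntegral.integral_add_adjacent_intervals
    (hw.continuous.intervalIntegrable (μ := volume) a m)
    (hw.continuous.intervalIntegrable (μ := volume) m b)
  have e3 : av w a b = (av w a m + av w m b) / 2 := by
    unfold av
    rw [← e2, show m - a = (b - a) / 2 from hm, show b - m = (b - a) / 2 by linarith]
    have : b - a ≠ 0 := by linarith
    field_simp
  unfold RR BB
  rw [e3, ← e1]; ring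

lemma RR_base {v w : ℝ → ℝ} (hw : ContDiff ℝ 1 w) {a b ε M : ℝ} (hab : a < b)
    (hv : ContinuousOn v (Icc a b)) (hε : 0 ≤ ε) (hM : 0 ≤ M)
    (ho : ∀ t ∈ Icc a b, |v t - v a| ≤ ε) (hd : ∀ t ∈ Icc a b, |deriv w t| ≤ M) :
    |RR v w a b| ≤ 2 * ε * M * (b - a) := by
  have hba : 0 < b - a := by linarith
  have hi := vd_int hw hv le_rfl hab.le le_rfl
  have hdi : IntervalIntegrable (deriv w) volume a b :=
    (hw.continuous_deriv le_rfl).intervalIntegrable _ _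
  have e1 : ∫ t in a..b, (v t - v a) * deriv w t
      = (∫ t in a..b, v t * deriv w t) - v a * (w b - w a) := by
    simp_rw [sub_mul]
    rw [intervalIntegral.integral_sub hi (hdi.const_mul _), intervalIntegral.integral_const_mul,
      intervalIntegral.integral_deriv_eq_sub (fun x _ => (hw.differentiable one_ne_zero) x) hdi]
  have e2 : RR v w a b = (v b - v a) * (w b - av w a b) - ∫ t in a..b, (v t - v a) * deriv w t := by
    rw [e1]; unfold RR BB; ring
  have h1 : |∫ t in a..b, (v t - v a) * deriv w t| ≤ ε * M * (b - a) := by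
    have := intervalIntegral.norm_integral_le_of_norm_le_const
      (f := fun t => (v t - v a) * deriv w t) (C := ε * M) (a := a) (b := b) fun t ht => by
        rw [uIoc_of_le hab.le] at ht
        have ht' := Ioc_subset_Icc_self ht
        rw [norm_mul]
        exact mul_le_mul (ho t ht') (hd t ht') (norm_nonneg _) hε
    rwa [abs_of_pos hba] at this
  have h2 : |av w a b - w b| ≤ M * (b - a) := by
    refine av_close hab (hw.continuous.intervalIntegrable _ _) fun t ht => ?_
    have := (convex_Icc a b).norm_image_sub_le_of_norm_deriv_le (f := w) (C := M)
      (fun x _ => (hw.differentiable one_ne_zero) x) hd (right_mem_Icc.2 hab.le) ht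
    refine this.trans (mul_le_mul_of_nonneg_left ?_ hM)
    rw [Real.norm_eq_abs, abs_le]; constructor <;> linarith [ht.1, ht.2]
  rw [abs_sub_comm] at h2
  rw [e2]
  have h3 : |(v b - v a) * (w b - av w a b)| ≤ ε * (M * (b - a)) := by
    rw [abs_mul]
    exact mul_le_mul (ho b (right_mem_Icc.2 hab.le)) h2 (abs_nonneg _) hε
  calc _ ≤ _ := abs_sub _ _
    _ ≤ _ := add_le_add h3 h1
    _ = _ := by ring

lemma key_step {δ : ℝ} (hδ : 0 < δ) {v w : ℝ → ℝ} (hw : ContDiff ℝ 1 w) {a m b lam : ℝ}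
    (hlam : 0 < lam) (hv : ContinuousOn v (Icc a b)) (h1 : a < m) (hm : m - a = (b - a) / 2)
    (hiv : IntegrableOn (GG (2 + δ) v) (Ioc a b ×ˢ Ioc a b))
    (hiw : IntegrableOn (GG (2 - 2 * δ) w) (Ioc a b ×ˢ Ioc a b)) (hδ1 : δ < 1) :
    |(av w a m - av w m b) / 2 * ((v m - v a) - (v b - v m))| ≤
      lam * ((b - a) ^ (-δ) * QQ (2 + δ) v a b a b)
      + lam⁻¹ * (C0 δ * QQ (2 - 2 * δ) w a m m b) := by
  have h2 : m < b := by linarith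
  have hba : 0 < b - a := by linarith
  have hC := C0_pos hδ
  have hQ := QQ_nonneg (2 + δ) v a b a b
  have hA := QQ_nonneg (2 - 2 * δ) w a m m b
  refine sq_le_amgm hlam (by positivity) (by positivity) ?_
  have s1 : (v m - v a) ^ 2 ≤ C0 δ * ((b - a) ^ δ * QQ (2 + δ) v a b a b) := by
    refine (two_pt hδ h1 (hv.mono (Icc_subset_Icc le_rfl h2.le)) (hiv.mono_set (prod_mono
      (Ioc_subset_Ioc le_rfl h2.le) (Ioc_subset_Ioc le_rfl h2.le)))).trans ?_
    refine mul_le_mul_of_nonneg_left (mul_le_mul ?_ ?_ (QQ_nonneg _ _ _ _ _ _) (by positivity)) hC.le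
    · exact Real.rpow_le_rpow (by linarith) (by linarith) hδ.le
    · exact QQ_mono hiv le_rfl h2.le le_rfl h2.le
  have s2 : (v b - v m) ^ 2 ≤ C0 δ * ((b - a) ^ δ * QQ (2 + δ) v a b a b) := by
    refine (two_pt hδ h2 (hv.mono (Icc_subset_Icc h1.le le_rfl)) (hiv.mono_set (prod_mono
      (Ioc_subset_Ioc h1.le le_rfl) (Ioc_subset_Ioc h1.le le_rfl)))).trans ?_
    refine mul_le_mul_of_nonneg_left (mul_le_mul ?_ ?_ (QQ_nonneg _ _ _ _ _ _) (by positivity)) hC.le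
    · exact Real.rpow_le_rpow (by linarith) (by linarith) hδ.le
    · exact QQ_mono hiv h1.le le_rfl h1.le le_rfl
  have s3 : ((v m - v a) - (v b - v m)) ^ 2 ≤ 4 * (C0 δ * ((b - a) ^ δ * QQ (2 + δ) v a b a b)) := by
    nlinarith [sq_nonneg ((v m - v a) + (v b - v m))]
  have t1 := av_sub_sq (hw.continuous.continuousOn (s := Icc a b)) le_rfl h2.le h1.le le_rfl h1 h2
  have t2 := QQ_lower (θ' := 0) (by linarith) (hw.continuous.continuousOn (s := Icc a b)) hiw
    le_rfl h2.le h1.le le_rfl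
  have t3 : (b - a) ^ (2 - 2 * δ - 0) = (b - a) ^ 2 * ((b - a) ^ (-δ) * (b - a) ^ (-δ)) := by
    rw [← Real.rpow_add hba, ← Real.rpow_natCast, ← Real.rpow_add hba]
    congr 1; push_cast; ring
  have t4 : (av w a m - av w m b) ^ 2 ≤
      4 * ((b - a) ^ (-δ) * (b - a) ^ (-δ) * QQ (2 - 2 * δ) w a m m b) := by
    have hsq : 0 < (b - a) ^ 2 := by positivity
    refine le_of_mul_le_mul_right ?_ hsq
    have := t1.trans t2
    rw [t3, hm, show b - m = (b - a) / 2 by linarith] at this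
    nlinarith
  have t5 : (b - a) ^ (-δ) * (b - a) ^ δ = 1 := by
    rw [← Real.rpow_add hba]; simp
  calc _ = 1 / 4 * ((av w a m - av w m b) ^ 2 * ((v m - v a) - (v b - v m)) ^ 2) := by ring
    _ ≤ 1 / 4 * ((4 * ((b - a) ^ (-δ) * (b - a) ^ (-δ) * QQ (2 - 2 * δ) w a m m b)) *
        (4 * (C0 δ * ((b - a) ^ δ * QQ (2 + δ) v a b a b)))) := by
        refine mul_le_mul_of_nonneg_left (mul_le_mul t4 s3 (sq_nonneg _) (by positivity)) (by norm_num)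
    _ = 4 * ((b - a) ^ (-δ) * QQ (2 + δ) v a b a b * (C0 δ * QQ (2 - 2 * δ) w a m m b))
        * ((b - a) ^ (-δ) * (b - a) ^ δ) := by ring
    _ = _ := by rw [t5]; ring

noncomputable def KK (δ : ℝ) : ℝ := 1 / ((2 : ℝ) ^ δ - 1)

lemma KK_pos {δ : ℝ} (hδ : 0 < δ) : 0 < KK δ := by
  have : (1 : ℝ) < 2 ^ δ := Real.one_lt_rpow (by norm_num) hδ
  unfold KK
  have : 0 < (2 : ℝ) ^ δ - 1 := by linarith
  positivity

lemma KK_eq {δ : ℝ} (hδ : 0 < δ) : 1 + KK δ = KK δ * 2 ^ δ := by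
  have : (1 : ℝ) < 2 ^ δ := Real.one_lt_rpow (by norm_num) hδ
  unfold KK
  have : (2 : ℝ) ^ δ - 1 ≠ 0 := by linarith
  field_simp; ring

lemma main_ind {δ : ℝ} (hδ : 0 < δ) (hδ1 : δ < 1) {v w : ℝ → ℝ} (hw : ContDiff ℝ 1 w)
    {a0 b0 lam ε M η : ℝ} (hlam : 0 < lam) (hv : ContinuousOn v (Icc a0 b0)) 
    (hiv : IntegrableOn (GG (2 + 2 * δ) v) (Ioc a0 b0 ×ˢ Ioc a0 b0))
    (hiw : IntegrableOn (GG (2 - 2 * δ) w) (Ioc a0 b0 ×ˢ Ioc a0 b0)) 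
    (hε : 0 ≤ ε) (hM : 0 ≤ M)
    (ho : ∀ x ∈ Icc a0 b0, ∀ y ∈ Icc a0 b0, |x - y| ≤ η → |v x - v y| ≤ ε)
    (hd : ∀ t ∈ Icc a0 b0, |deriv w t| ≤ M) (n : ℕ) :
    ∀ a b, a0 ≤ a → a < b → b ≤ b0 → b - a ≤ 2 ^ n * η →
    |RR v w a b| + lam * KK δ * ((b - a) ^ (-δ) * QQ (2 + δ) v a b a b) ≤
      lam * (1 + KK δ) * QQ (2 + 2 * δ) v a b a b
      + lam⁻¹ * (C0 δ * QQ (2 - 2 * δ) w a b a b) + 2 * ε * M * (b - a) := by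
  have hK := KK_pos hδ
  have hC := C0_pos hδ
  induction n with
  | zero =>
    intro a b ha hab hb hη
    have hba : 0 < b - a := by linarith
    have h1 := RR_base hw hab (hv.mono (Icc_subset_Icc ha hb)) hε hM (fun t ht =>
      ho t ⟨ha.trans ht.1, ht.2.trans hb⟩ a ⟨ha, by linarith⟩ (by
        rw [abs_of_nonneg (by linarith [ht.1])]; linarith [ht.2]))
      (fun t ht => hd t ⟨ha.trans ht.1, ht.2.trans hb⟩)
    have hs : Ioc a b ×ˢ Ioc a b ⊆ Ioc a0 b0 ×ˢ Ioc a0 b0 :=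
      prod_mono (Ioc_subset_Ioc ha hb) (Ioc_subset_Ioc ha hb)
    have h2 := QQ_lower (θ' := 2 + δ) (by linarith) (hv.mono (Icc_subset_Icc ha hb))
      (hiv.mono_set hs) le_rfl le_rfl le_rfl le_rfl
    rw [show 2 + 2 * δ - (2 + δ) = δ by ring] at h2
    have t5 : (b - a) ^ (-δ) * (b - a) ^ δ = 1 := by
      rw [← Real.rpow_add hba]; simp
    have h3 : (b - a) ^ (-δ) * QQ (2 + δ) v a b a b ≤ QQ (2 + 2 * δ) v a b a b := by
      calc _ ≤ (b - a) ^ (-δ) * ((b - a) ^ δ * QQ (2 + 2 * δ) v a b a b) := by gcongr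
        _ = _ := by rw [← mul_assoc, t5, one_mul]
    have h4 := QQ_nonneg (2 + 2 * δ) v a b a b
    have h5 := QQ_nonneg (2 - 2 * δ) w a b a b
    have h6 : lam * KK δ * ((b - a) ^ (-δ) * QQ (2 + δ) v a b a b) ≤
        lam * KK δ * QQ (2 + 2 * δ) v a b a b := by gcongr
    have h7 : 0 ≤ lam⁻¹ * (C0 δ * QQ (2 - 2 * δ) w a b a b) := by positivity
    have h8 : 0 ≤ lam * QQ (2 + 2 * δ) v a b a b := by positivity
    linarith
  | succ n ih =>
    intro a b ha hab hb hη
    have hba : 0 < b - a := by linarith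
    obtain ⟨m, hm⟩ : ∃ m, m = (a + b) / 2 := ⟨_, rfl⟩
    have ham : a < m := by linarith
    have hmb : m < b := by linarith
    have hma : m - a = (b - a) / 2 := by linarith
    have hbm : b - m = (b - a) / 2 := by linarith
    have hs : Ioc a b ×ˢ Ioc a b ⊆ Ioc a0 b0 ×ˢ Ioc a0 b0 :=
      prod_mono (Ioc_subset_Ioc ha hb) (Ioc_subset_Ioc ha hb)
    have hv' := hv.mono (Icc_subset_Icc ha hb)
    have hiv' := hiv.mono_set hs
    have hiw' := hiw.mono_set hs
    have hiv2 : IntegrableOn (GG (2 + δ) v) (Ioc a b ×ˢ Ioc a b) :=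
      GG_int_lower (by linarith) hv' hiv'
    have i1 := ih a m ha ham (by linarith) (by rw [hma]; rw [pow_succ] at hη; linarith)
    have i2 := ih m b (by linarith) hmb hb (by rw [hbm]; rw [pow_succ] at hη; linarith)
    have k := key_step hδ hw hlam hv' ham hma hiv2 hiw' hδ1
    have sp := RR_split hw hv' ham hma
    have q1 := QQ_split ham.le hmb.le hiv'
    have q2 := QQ_split ham.le hmb.le hiv2
    have q3 := QQ_split ham.le hmb.le hiw'
    have c1 := QQ_lower (θ' := 2 + δ) (by linarith) hv' hiv' le_rfl hmb.le ham.le le_rfl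
    have c2 := QQ_lower (θ' := 2 + δ) (by linarith) hv' hiv' ham.le le_rfl le_rfl hmb.le
    rw [show 2 + 2 * δ - (2 + δ) = δ by ring] at c1 c2
    have n1 := QQ_nonneg (2 - 2 * δ) w m b a m
    have t5 : (b - a) ^ (-δ) * (b - a) ^ δ = 1 := by
      rw [← Real.rpow_add hba]; simp
    have t6 : ((b - a) / 2) ^ (-δ) = 2 ^ δ * (b - a) ^ (-δ) := by
      rw [Real.div_rpow hba.le (by norm_num), Real.rpow_neg (by norm_num : (0:ℝ) ≤ 2)]
      field_simp
    rw [hma] at i1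
    rw [hbm] at i2
    have abs1 : |RR v w a b| ≤ |RR v w a m| + |RR v w m b|
        + |(av w a m - av w m b) / 2 * ((v m - v a) - (v b - v m))| := by
      rw [sp]; exact abs_add_three _ _ _
    have hKe := KK_eq hδ
    set X1 := QQ (2 + δ) v a m m b + QQ (2 + δ) v m b a m
    set X2 := QQ (2 + 2 * δ) v a m m b + QQ (2 + 2 * δ) v m b a m
    have cr : (b - a) ^ (-δ) * X1 ≤ X2 := by
      calc _ ≤ (b - a) ^ (-δ) * ((b - a) ^ δ * X2) := by
            gcongr; rw [mul_add]; exact add_le_add c1 c2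
        _ = _ := by rw [← mul_assoc, t5, one_mul]
    have E : lam * ((b - a) ^ (-δ) * QQ (2 + δ) v a b a b)
        + lam * KK δ * ((b - a) ^ (-δ) * QQ (2 + δ) v a b a b) ≤
        lam * KK δ * (((b - a) / 2) ^ (-δ) * QQ (2 + δ) v a m a m)
        + lam * KK δ * (((b - a) / 2) ^ (-δ) * QQ (2 + δ) v m b m b) + lam * (1 + KK δ) * X2 := by
      calc _ = lam * (1 + KK δ) * ((b - a) ^ (-δ) * QQ (2 + δ) v a b a b) := by ring
        _ = lam * (KK δ * 2 ^ δ) * ((b - a) ^ (-δ) * (QQ (2 + δ) v a m a m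
              + QQ (2 + δ) v m b m b)) + lam * (1 + KK δ) * ((b - a) ^ (-δ) * X1) := by
            rw [q2, ← hKe]; ring
        _ ≤ lam * (KK δ * 2 ^ δ) * ((b - a) ^ (-δ) * (QQ (2 + δ) v a m a m
              + QQ (2 + δ) v m b m b)) + lam * (1 + KK δ) * X2 := by gcongr
        _ = _ := by rw [t6]; ring
    have W : 0 ≤ lam⁻¹ * (C0 δ * QQ (2 - 2 * δ) w m b a m) := by positivity
    have Q1 : lam * (1 + KK δ) * QQ (2 + 2 * δ) v a b a b =
      lam * (1 + KK δ) * QQ (2 + 2 * δ) v a m a m + lam * (1 + KK δ) * QQ (2 + 2 * δ) v m b m b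
        + lam * (1 + KK δ) * X2 := by rw [q1]; ring
    have Q3 : lam⁻¹ * (C0 δ * QQ (2 - 2 * δ) w a b a b) =
      lam⁻¹ * (C0 δ * QQ (2 - 2 * δ) w a m a m) + lam⁻¹ * (C0 δ * QQ (2 - 2 * δ) w m b m b)
      + lam⁻¹ * (C0 δ * QQ (2 - 2 * δ) w a m m b) + lam⁻¹ * (C0 δ * QQ (2 - 2 * δ) w m b a m) := by
      rw [q3]; ring
    linarith

lemma local_bound {δ : ℝ} (hδ : 0 < δ) (hδ1 : δ < 1) {v w : ℝ → ℝ} (hw : ContDiff ℝ 1 w)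
    {a b lam : ℝ} (hlam : 0 < lam) (hab : a < b) (hv : ContinuousOn v (Icc a b))
    (hiv : IntegrableOn (GG (2 + 2 * δ) v) (Ioc a b ×ˢ Ioc a b))
    (hiw : IntegrableOn (GG (2 - 2 * δ) w) (Ioc a b ×ˢ Ioc a b)) :
    |BB v w a b| ≤ lam * ((2 + KK δ) * QQ (2 + 2 * δ) v a b a b)
      + lam⁻¹ * (C0 δ * (QQ (2 - 2 * δ) w a b a b
          + (b - a) ^ (2 * δ - 1) * ∫ t in a..b, w t ^ 2)) := by
  have hba : 0 < b - a := by linarith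
  have hC := C0_pos hδ
  have hK := KK_pos hδ
  have hQ := QQ_nonneg (2 + 2 * δ) v a b a b
  have hW : 0 ≤ ∫ t in a..b, w t ^ 2 :=
    intervalIntegral.integral_nonneg hab.le fun p _ => sq_nonneg _
  have hR : |RR v w a b| ≤ lam * (1 + KK δ) * QQ (2 + 2 * δ) v a b a b
      + lam⁻¹ * (C0 δ * QQ (2 - 2 * δ) w a b a b) := by
    obtain ⟨M, hM⟩ := isCompact_Icc.exists_bound_of_continuousOn (s := Icc a b)
      (hw.continuous_deriv le_rfl).continuousOn
    have hM0 : 0 ≤ M := (norm_nonneg _).trans (hM a (left_mem_Icc.2 hab.le))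
    refine le_of_forall_pos_le_add fun e he => ?_
    set ε := e / (2 * (M + 1) * (b - a)) with hε
    have hε0 : 0 < ε := by positivity
    have huc := isCompact_Icc.uniformContinuousOn_of_continuous hv
    obtain ⟨η, hη, H⟩ := Metric.uniformContinuousOn_iff.1 huc ε hε0
    obtain ⟨n, hn⟩ := pow_unbounded_of_one_lt ((b - a) / (η / 2)) (one_lt_two : (1:ℝ) < 2)
    rw [div_lt_iff₀ (by positivity)] at hn
    have := main_ind hδ hδ1 hw hlam hv hiv hiw hε0.le hM0 (η := η / 2)
      (fun x hx y hy hxy => (H x hx y hy (by rw [Real.dist_eq]; linarith)).le) hM n a b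
      le_rfl hab le_rfl hn.le
    have h1 : 0 ≤ lam * KK δ * ((b - a) ^ (-δ) * QQ (2 + δ) v a b a b) := by
      have := QQ_nonneg (2 + δ) v a b a b
      positivity
    have h2 : 2 * ε * M * (b - a) ≤ e := by
      have : 2 * ε * (M + 1) * (b - a) = e := by rw [hε]; field_simp
      have : 0 < ε * (b - a) := by positivity
      nlinarith
    linarith
  have hS : |av w a b * (v b - v a)| ≤ lam * QQ (2 + 2 * δ) v a b a b
      + lam⁻¹ * (C0 δ * ((b - a) ^ (2 * δ - 1) * ∫ t in a..b, w t ^ 2)) := by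
    refine sq_le_amgm hlam hQ (by positivity) ?_
    have h1 := two_pt hδ hab hv (GG_int_lower (by linarith) hv hiv)
    have h2 := QQ_lower (θ' := 2 + δ) (by linarith) hv hiv le_rfl le_rfl le_rfl le_rfl
    rw [show 2 + 2 * δ - (2 + δ) = δ by ring] at h2
    have h3 := av_sq hw.continuous hab
    have h4 : (v b - v a) ^ 2 ≤ C0 δ * ((b - a) ^ δ * ((b - a) ^ δ *
      QQ (2 + 2 * δ) v a b a b)) := h1.trans (by gcongr)
    have h5 : (b - a) ^ δ * (b - a) ^ δ = (b - a) ^ (2 * δ - 1) * (b - a) := by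
      nth_rw 4 [← Real.rpow_one (b - a)]
      rw [← Real.rpow_add hba, ← Real.rpow_add hba]; congr 1; ring
    have h6 : 0 ≤ (b - a) ^ (2 * δ - 1) := by positivity
    calc _ = (av w a b) ^ 2 * (v b - v a) ^ 2 := by ring
      _ ≤ (av w a b) ^ 2 * (C0 δ * ((b - a) ^ δ * ((b - a) ^ δ *
        QQ (2 + 2 * δ) v a b a b))) := by gcongr
      _ = (C0 δ * QQ (2 + 2 * δ) v a b a b) * ((b - a) ^ δ * (b - a) ^ δ) * (av w a b) ^ 2 := by ring
      _ = (C0 δ * QQ (2 + 2 * δ) v a b a b * (b - a) ^ (2 * δ - 1))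
          * ((av w a b) ^ 2 * (b - a)) := by rw [h5]; ring
      _ ≤ (C0 δ * QQ (2 + 2 * δ) v a b a b * (b - a) ^ (2 * δ - 1))
          * (∫ t in a..b, w t ^ 2) := by gcongr
      _ ≤ 4 * ((C0 δ * QQ (2 + 2 * δ) v a b a b * (b - a) ^ (2 * δ - 1))
          * (∫ t in a..b, w t ^ 2)) := le_mul_of_one_le_left (by positivity) (by norm_num)
      _ = _ := by ring
  have : BB v w a b = RR v w a b + av w a b * (v b - v a) := by unfold RR; ring
  rw [this]
  refine (abs_add_le _ _).trans ((add_le_add hR hS).trans (le_of_eq ?_))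
  ring

lemma L2_toReal {w : ℝ → ℝ} (hw : Continuous w) :
    (L2sq 0 1 w).toReal = ∫ t in (0:ℝ)..1, w t ^ 2 := by
  unfold L2sq
  rw [intervalIntegral.integral_of_le zero_le_one, integral_Ioc_eq_integral_Ioo,
    integral_eq_lintegral_of_nonneg_ae (Filter.Eventually.of_forall fun _ => sq_nonneg _)]
  exact (hw.pow 2).aestronglyMeasurable

lemma sum_QQ_le {θ : ℝ} {f : ℝ → ℝ} {x : ℕ → ℝ} (N : ℕ)
    (hx : ∀ i < N, x i < x (i + 1))
    (h : IntegrableOn (GG θ f) (Ioc (x 0) (x N) ×ˢ Ioc (x 0) (x N))) :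
    x 0 ≤ x N ∧ ∑ i ∈ Finset.range N, QQ θ f (x i) (x (i + 1)) (x i) (x (i + 1))
      ≤ QQ θ f (x 0) (x N) (x 0) (x N) := by
  induction N with
  | zero => simpa using QQ_nonneg _ _ _ _ _ _
  | succ n ih =>
    have h1 : x n < x (n + 1) := hx n (by omega)
    have hs : Ioc (x 0) (x n) ⊆ Ioc (x 0) (x (n + 1)) := Ioc_subset_Ioc le_rfl h1.le
    obtain ⟨h2, h3⟩ := ih (fun i hi => hx i (by omega)) (h.mono_set (prod_mono hs hs))
    refine ⟨h2.trans h1.le, ?_⟩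
    rw [Finset.sum_range_succ, QQ_split h2 h1.le h]
    have := QQ_nonneg θ f (x 0) (x n) (x n) (x (n + 1))
    have := QQ_nonneg θ f (x n) (x (n + 1)) (x 0) (x n)
    linarith

lemma opt_bound {X K1 K2 e y : ℝ} (hK1 : 0 ≤ K1) (he : 0 ≤ e) (hy : 0 < y)
    (h : ∀ lam : ℝ, 0 < lam → X ≤ lam * (K1 * e ^ 2) + lam⁻¹ * (K2 * y ^ 2)) :
    X ≤ (K1 + K2) * y * e := by
  have key : ∀ ε : ℝ, 0 < ε → X ≤ (K1 + K2) * y * e + K2 * y * ε := by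
    intro ε hε
    have h1 := h (y / (e + ε)) (by positivity)
    have h2 : y / (e + ε) * (K1 * e ^ 2) ≤ K1 * y * e := by
      rw [div_mul_eq_mul_div, div_le_iff₀ (by positivity)]
      have : 0 ≤ K1 * y * e * ε := by positivity
      nlinarith
    have h3 : (y / (e + ε))⁻¹ * (K2 * y ^ 2) = K2 * y * (e + ε) := by
      field_simp
    rw [h3] at h1
    linarith
  have ht : Filter.Tendsto (fun ε : ℝ => (K1 + K2) * y * e + K2 * y * ε)
      (nhdsWithin 0 (Ioi 0)) (nhds ((K1 + K2) * y * e + K2 * y * 0)) := by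
    apply Filter.Tendsto.mono_left _ nhdsWithin_le_nhds
    apply Continuous.tendsto; fun_prop
  have := ge_of_tendsto ht (Filter.eventually_of_mem self_mem_nhdsWithin key)
  simpa using this

/-- for `s ∈ (1/2,1)` and a quasi-uniform partition `𝒯` of `(0,1)` into
`N` intervals, the piecewise distributional derivative of a piecewise `H^s` function
`v` satisfies `‖D_𝒯 v‖_{H̃^{s-1}(0,1)} ≤ C N^{1-s} (∑_T |v|²_{H^s(T)})^{1/2}`, where the
`H̃^{s-1}` norm is the dual norm against `H^{1-s}(0,1)`, realized by testing with smooth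
functions `w` (the pairing being `∑_T (v w|_{∂T} − ∫_T v Dw)`). -/
theorem piecewise_derivative_dual_bound (s : ℝ) (hs1 : 1 / 2 < s) (hs2 : s < 1)
    (cq : ℝ) (hcq : 1 ≤ cq) :
    ∃ C : ℝ, 0 < C ∧
      ∀ (N : ℕ), 0 < N → ∀ x : ℕ → ℝ, x 0 = 0 → x N = 1 →
      (∀ i < N, 1 / (cq * N) ≤ x (i + 1) - x i ∧ x (i + 1) - x i ≤ cq / N) →
      ∀ v : ℕ → ℝ → ℝ,
      (∀ i < N, ContinuousOn (v i) (Icc (x i) (x (i + 1)))) →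
      (∀ i < N, SlobSq s (x i) (x (i + 1)) (v i) < ⊤) →
      sSup {r : ℝ | ∃ w : ℝ → ℝ, ContDiff ℝ (⊤ : ℕ∞) w ∧ 0 < HsNorm (1 - s) w ∧
          r = |∑ i ∈ Finset.range N,
                (v i (x (i + 1)) * w (x (i + 1)) - v i (x i) * w (x i)
                  - ∫ t in Ioo (x i) (x (i + 1)), v i t * deriv w t)| / HsNorm (1 - s) w}
        ≤ C * (N : ℝ) ^ (1 - s) *
            Real.sqrt (∑ i ∈ Finset.range N, (SlobSq s (x i) (x (i + 1)) (v i)).toReal) := by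
  have hδ : 0 < s - 1 / 2 := by linarith
  have hδ1 : s - 1 / 2 < 1 := by linarith
  obtain ⟨δ, hδe⟩ : ∃ δ, δ = s - 1 / 2 := ⟨_, rfl⟩
  rw [← hδe] at hδ hδ1
  have hC := C0_pos hδ
  have hK := KK_pos hδ
  have eα : 1 + 2 * s = 2 + 2 * δ := by rw [hδe]; ring
  have eγ : 1 + 2 * (1 - s) = 2 - 2 * δ := by rw [hδe]; ring
  refine ⟨(2 + KK δ) + C0 δ * cq ^ (1 - 2 * δ), by positivity, ?_⟩
  intro N hN x hx0 hxN hx v hv hvs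
  have hNpos : (0 : ℝ) < N := by exact_mod_cast hN
  have hN1 : (1 : ℝ) ≤ N := by exact_mod_cast hN
  have hh : 0 < 1 / (cq * N) := by positivity
  have hlt : ∀ i < N, x i < x (i + 1) := fun i hi => by linarith [(hx i hi).1]
  apply Real.sSup_le _ (by positivity)
  rintro r ⟨w, hwC, hwpos, rfl⟩
  have hw : ContDiff ℝ 1 w := hwC.of_le (by exact_mod_cast le_top)
  rw [div_le_iff₀ hwpos]
  have hfin : L2sq 0 1 w + SlobSq (1 - s) 0 1 w ≠ ⊤ := by
    intro h
    rw [HsNorm, h] at hwpos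
    simp at hwpos
  have hfin2 : SlobSq (1 - s) 0 1 w ≠ ⊤ := fun h => hfin (by simp [h])
  have hfin1 : L2sq 0 1 w ≠ ⊤ := fun h => hfin (by simp [h])
  have hH : HsNorm (1 - s) w ^ 2 = (∫ t in (0:ℝ)..1, w t ^ 2) + QQ (2 - 2 * δ) w 0 1 0 1 := by
    rw [HsNorm, Real.sq_sqrt ENNReal.toReal_nonneg, ENNReal.toReal_add hfin1 hfin2,
      L2_toReal hw.continuous, slob_toReal hw.continuous.continuousOn, eγ]
  have hiw : IntegrableOn (GG (2 - 2 * δ) w) (Ioc (x 0) (x N) ×ˢ Ioc (x 0) (x N)) := by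
    rw [hx0, hxN, ← eγ]
    exact slob_int hw.continuous.continuousOn (lt_top_iff_ne_top.2 hfin2)
  have hmono : ∀ n ≤ N, x 0 ≤ x n ∧ x n ≤ x N := by
    intro n hn
    constructor
    · induction n with
      | zero => exact le_rfl
      | succ k ih => exact (ih (by omega)).trans (hlt k (by omega)).le
    · induction hn using Nat.decreasingInduction with
      | self => exact le_rfl
      | of_succ k hk ih => exact (hlt k hk).le.trans ih
  have hsumA := (sum_QQ_le N hlt hiw).2
  rw [hx0, hxN] at hsumA
  have hsumW : ∑ i ∈ Finset.range N, ∫ t in (x i)..(x (i + 1)), w t ^ 2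
      = ∫ t in (0:ℝ)..1, w t ^ 2 := by
    rw [intervalIntegral.sum_integral_adjacent_intervals, hx0, hxN]
    intro k _
    exact (hw.continuous.pow 2).intervalIntegrable _ _
  have hE : ∑ i ∈ Finset.range N, (SlobSq s (x i) (x (i + 1)) (v i)).toReal
      = ∑ i ∈ Finset.range N, QQ (2 + 2 * δ) (v i) (x i) (x (i + 1)) (x i) (x (i + 1)) := by
    refine Finset.sum_congr rfl fun i hi => ?_
    rw [slob_toReal (hv i (Finset.mem_range.1 hi)), eα]
  have hEn : 0 ≤ ∑ i ∈ Finset.range N, (SlobSq s (x i) (x (i + 1)) (v i)).toReal :=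
    Finset.sum_nonneg fun _ _ => ENNReal.toReal_nonneg
  have hNs : ((N : ℝ) ^ (1 - s)) ^ 2 = (N : ℝ) ^ (1 - 2 * δ) := by
    rw [← Real.rpow_natCast, ← Real.rpow_mul hNpos.le]
    congr 1; rw [hδe]; push_cast; ring
  have hpos1 : (0 : ℝ) ≤ 1 - 2 * δ := by linarith
  have hcN : 1 ≤ cq ^ (1 - 2 * δ) * (N : ℝ) ^ (1 - 2 * δ) :=
    one_le_mul_of_one_le_of_one_le (Real.one_le_rpow hcq hpos1) (Real.one_le_rpow hN1 hpos1)
  have main := opt_bound (X := |∑ i ∈ Finset.range N,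
                (v i (x (i + 1)) * w (x (i + 1)) - v i (x i) * w (x i)
                  - ∫ t in Ioo (x i) (x (i + 1)), v i t * deriv w t)|)
    (K1 := 2 + KK δ) (K2 := C0 δ * cq ^ (1 - 2 * δ))
    (e := Real.sqrt (∑ i ∈ Finset.range N, (SlobSq s (x i) (x (i + 1)) (v i)).toReal))
    (y := (N : ℝ) ^ (1 - s) * HsNorm (1 - s) w) (by positivity) (Real.sqrt_nonneg _)
    (by positivity) ?_
  · refine main.trans (le_of_eq ?_); ring
  intro lam hlam
  rw [Real.sq_sqrt hEn, hE, mul_pow, hNs, hH]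
  have hloc : ∀ i ∈ Finset.range N, |v i (x (i + 1)) * w (x (i + 1)) - v i (x i) * w (x i)
        - ∫ t in Ioo (x i) (x (i + 1)), v i t * deriv w t| ≤
      lam * ((2 + KK δ) * QQ (2 + 2 * δ) (v i) (x i) (x (i + 1)) (x i) (x (i + 1)))
      + lam⁻¹ * (C0 δ * (cq ^ (1 - 2 * δ) * (N : ℝ) ^ (1 - 2 * δ)) *
        (QQ (2 - 2 * δ) w (x i) (x (i + 1)) (x i) (x (i + 1))
          + ∫ t in (x i)..(x (i + 1)), w t ^ 2)) := by
    intro i hi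
    have hi := Finset.mem_range.1 hi
    have hab := hlt i hi
    have hs : Ioc (x i) (x (i + 1)) ⊆ Ioc (x 0) (x N) :=
      Ioc_subset_Ioc (hmono i hi.le).1 (hmono (i + 1) hi).2
    have := local_bound hδ hδ1 hw hlam hab (hv i hi)
      (by rw [← eα]; exact slob_int (hv i hi) (hvs i hi)) (hiw.mono_set (prod_mono hs hs))
    rw [← integral_Ioc_eq_integral_Ioo, ← intervalIntegral.integral_of_le hab.le]
    refine this.trans ?_
    have hW : 0 ≤ ∫ t in (x i)..(x (i + 1)), w t ^ 2 :=
      intervalIntegral.integral_nonneg hab.le fun p _ => sq_nonneg _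
    have hA := QQ_nonneg (2 - 2 * δ) w (x i) (x (i + 1)) (x i) (x (i + 1))
    have hpw : (x (i + 1) - x i) ^ (2 * δ - 1) ≤ cq ^ (1 - 2 * δ) * (N : ℝ) ^ (1 - 2 * δ) := by
      calc _ ≤ (1 / (cq * N)) ^ (2 * δ - 1) :=
            Real.rpow_le_rpow_of_nonpos hh (hx i hi).1 (by linarith)
        _ = _ := by
            rw [one_div, Real.inv_rpow (by positivity), ← Real.rpow_neg (by positivity),
              Real.mul_rpow (by positivity) (by positivity)]
            ring_nf
    rw [mul_assoc (C0 δ)]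
    gcongr
    rw [mul_add]
    gcongr
    exact le_mul_of_one_le_left hA hcN
  refine (Finset.abs_sum_le_sum_abs _ _).trans ((Finset.sum_le_sum hloc).trans ?_)
  rw [Finset.sum_add_distrib, ← Finset.mul_sum, ← Finset.mul_sum, ← Finset.mul_sum,
    ← Finset.mul_sum, Finset.sum_add_distrib, hsumW]
  rw [show C0 δ * cq ^ (1 - 2 * δ) * ((N : ℝ) ^ (1 - 2 * δ) * ((∫ t in (0:ℝ)..1, w t ^ 2)
    + QQ (2 - 2 * δ) w 0 1 0 1)) = C0 δ * (cq ^ (1 - 2 * δ) * (N : ℝ) ^ (1 - 2 * δ)) *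
      (QQ (2 - 2 * δ) w 0 1 0 1 + ∫ t in (0:ℝ)..1, w t ^ 2) by ring]
  gcongr
end
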